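/- arXiv:2006.10580 — 2 statements merged into one kernel-verified Lean document; each statement's English description precedes it below -/
import Mathlib

section
/- Let M = (M_k) be a nondecreasing logarithmically convex sequence of positive real numbers with M_0 = 1. Then for every ρ ∈ (0,1) and q ≥ 1 there exists a C^∞ function f : ℝ² → ℝ (namely f(x) = h(x/ρ − (q,0)) for a base function h) such that: (i) for every x ∈ ℝ² and every multi-index α ∈ ℕ², |∂^α f(x)| ≤ 64·ρ²·8^{|α|+1}·α!·M_{α₂}/(‖x − (qρ,0)‖² + ρ²)^{1+|α|/2}; and (ii) for every n ∈ ℕ, |∂^{2n}f/∂x₂^{2n}(qρ,0)| ≥ (2n)!·M_{2n}/(4^n·ρ^{2n}). -/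
/-!
Put `m k = M (k + 1) / M k`. Log-convexity says that `n ↦ (m k) ^ n / M n` is largest at `n = k`, so
the weights of the base function are `M k / (2 * m k) ^ k`, and
`M k / (m k) ^ k * (m k) ^ j ≤ M j` for all `j`.

The kernel `g y = 1 / (1 + ‖y‖²)` on an inner product space solves `g' = -2 g² ⟪y, ·⟫`. Since
`⟪y, ·⟫` is linear in `y`, Leibniz' rule applied to this equation gives
`‖Dⁿ g y‖ ≤ n! 4ⁿ √(g y) ^ (n + 2)` by induction. Rescaling, each `x₂`-derivative of the `k`-th
term of the series for `f` costs a factor `m k / ρ`, and the weight turns `(m k) ^ j` into at most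
`M j / 2 ^ k`; the geometric series does the rest.

At the centre the even `x₂`-derivatives of all the terms have the same sign, by the geometric
expansion of `1 / (1 + t²)`, and the term `k = 2 n` alone gives the lower bound.
-/

open Real Filter Topology
open scoped Classical
noncomputable section
def pd1 (f : ℝ × ℝ → ℝ) : ℝ × ℝ → ℝ := fun x => fderiv ℝ f x (1, 0)
def pd2 (f : ℝ × ℝ → ℝ) : ℝ × ℝ → ℝ := fun x => fderiv ℝ f x (0, 1)
def pd (α : ℕ × ℕ) (f : ℝ × ℝ → ℝ) : ℝ × ℝ → ℝ := pd1^[α.1] (pd2^[α.2] f)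
def LogConvexSeq (M : ℕ → ℝ) : Prop := Monotone (fun k => M (k + 1) / M k)
def MemDC (M : ℕ → ℝ) (f : ℝ × ℝ → ℝ) : Prop :=
  ContDiff ℝ (⊤ : ℕ∞) f ∧
  ∀ K : Set (ℝ × ℝ), IsCompact K →
    ∃ A > (0:ℝ), ∃ B > (0:ℝ), ∀ x ∈ K, ∀ α : ℕ × ℕ,
      |pd α f x| ≤ A * B ^ (α.1 + α.2) * (Nat.factorial α.1 * Nat.factorial α.2) * M (α.1 + α.2)
def blowup : ℝ × ℝ → ℝ × ℝ := fun p => (p.1 * Real.cos p.2, p.1 * Real.sin p.2)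
def ostrowski (M : ℕ → ℝ) (r : ℝ) : ℝ := ⨆ n : ℕ, r ^ (n + 2) / M n
def baseH (M : ℕ → ℝ) (x : ℝ × ℝ) : ℝ :=
  ∑' k : ℕ,
    (M (k + 2) / M (k + 1)) ^ 2 / (2 ^ (k + 1) * ostrowski M (M (k + 2) / M (k + 1))) *
      (1 / (x.1 ^ 2 + (M (k + 2) / M (k + 1) * x.2) ^ 2 + 1))
def blockF (M : ℕ → ℝ) (q ρ : ℝ) (x : ℝ × ℝ) : ℝ := baseH M (x.1 / ρ - q, x.2 / ρ)
def rhoSeq (M : ℕ → ℝ) (n : ℕ) : ℝ := M n / M (n + 1)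
def FGamma (M : ℕ → ℝ) (E : ℝ → ℝ) (Λ : Set ℕ) (x : ℝ × ℝ) : ℝ :=
  ∑' l : ℕ, Set.indicator Λ
    (fun l => blockF M (E (rhoSeq M l) / rhoSeq M l) (rhoSeq M l) x /
      (ostrowski M (rhoSeq M l)⁻¹ * 2 ^ l)) l

open scoped Nat ContDiff

section Leibniz

variable {E F : Type*} [NormedAddCommGroup E] [NormedSpace ℝ E] [NormedAddCommGroup F]
  [NormedSpace ℝ F]

lemma norm_iteratedFDeriv_mul_le_of_le {f g : E → ℝ} (hf : ContDiff ℝ ∞ f) (hg : ContDiff ℝ ∞ g)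
    {x : E} {A B r : ℝ} {n : ℕ}
    (hfn : ∀ k ≤ n, ‖iteratedFDeriv ℝ k f x‖ ≤ A * r ^ k * k !)
    (hgn : ∀ k ≤ n, ‖iteratedFDeriv ℝ k g x‖ ≤ B * r ^ k * k !) :
    ‖iteratedFDeriv ℝ n (fun y => f y * g y) x‖ ≤ A * B * r ^ n * (n + 1)! := by
  have term_le : ∀ k ∈ Finset.range (n + 1),
      n.choose k * ‖iteratedFDeriv ℝ k f x‖ * ‖iteratedFDeriv ℝ (n - k) g x‖ ≤
        A * B * r ^ n * n ! := by
    intro k hk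
    have hkn : k ≤ n := Finset.mem_range_succ_iff.1 hk
    calc n.choose k * ‖iteratedFDeriv ℝ k f x‖ * ‖iteratedFDeriv ℝ (n - k) g x‖
        ≤ n.choose k * (A * r ^ k * k !) * (B * r ^ (n - k) * (n - k)!) := by
          gcongr
          · exact mul_nonneg (by positivity) ((norm_nonneg _).trans (hfn k hkn))
          · exact hfn k hkn
          · exact hgn (n - k) (n.sub_le k)
      _ = A * B * (r ^ k * r ^ (n - k)) * (n.choose k * k ! * (n - k)!) := by ring
      _ = A * B * r ^ n * n ! := by
          rw [← pow_add, Nat.add_sub_cancel' hkn]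
          exact_mod_cast congrArg _ (congrArg Nat.cast (Nat.choose_mul_factorial_mul_factorial hkn))
  calc ‖iteratedFDeriv ℝ n (fun y => f y * g y) x‖
      ≤ ∑ k ∈ Finset.range (n + 1),
          n.choose k * ‖iteratedFDeriv ℝ k f x‖ * ‖iteratedFDeriv ℝ (n - k) g x‖ :=
        norm_iteratedFDeriv_mul_le hf hg x (mod_cast le_top)
    _ ≤ (n + 1) * (A * B * r ^ n * n !) := by
        simpa using Finset.sum_le_sum term_le
    _ = A * B * r ^ n * (n + 1)! := by
        rw [Nat.factorial_succ]
        push_cast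
        ring

lemma norm_iteratedFDeriv_one_clm (L : E →L[ℝ] F) (x : E) : ‖iteratedFDeriv ℝ 1 L x‖ = ‖L‖ := by
  rw [norm_iteratedFDeriv_one, L.fderiv]

lemma iteratedFDeriv_clm_eq_zero (L : E →L[ℝ] F) {k : ℕ} (hk : 2 ≤ k) (x : E) :
    iteratedFDeriv ℝ k L x = 0 := by
  obtain ⟨k, rfl⟩ := Nat.exists_eq_add_of_le' hk
  have fderiv_eq : fderiv ℝ L = fun _ => L := funext fun _ => L.fderiv
  rw [← norm_eq_zero, ← norm_iteratedFDeriv_fderiv, fderiv_eq, iteratedFDeriv_succ_const,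
    Pi.zero_apply, norm_zero]

-- For `n = 0` the truncated `n - 1` is harmless: its coefficient vanishes.
lemma norm_iteratedFDeriv_smul_clm_le {f : E → ℝ} (hf : ContDiff ℝ ∞ f) (L : E →L[ℝ] F) (x : E)
    (n : ℕ) :
    ‖iteratedFDeriv ℝ n (fun y => f y • L y) x‖ ≤
      ‖iteratedFDeriv ℝ n f x‖ * ‖L x‖ + n * ‖iteratedFDeriv ℝ (n - 1) f x‖ * ‖L‖ := by
  refine (norm_iteratedFDeriv_smul_le hf L.contDiff x (mod_cast le_top)).trans ?_
  rcases n with _ | n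
  · simp
  · rw [Finset.sum_range_succ, Finset.sum_range_succ, Finset.sum_eq_zero fun k hk => ?_]
    · rw [Nat.add_sub_cancel_left, Nat.sub_self, norm_iteratedFDeriv_one_clm,
        norm_iteratedFDeriv_zero, Nat.choose_succ_self_right, Nat.choose_self]
      simp [add_comm]
    · rw [iteratedFDeriv_clm_eq_zero L (by grind), norm_zero, mul_zero]

-- The induction closes for every constant `C` in place of `4` with `2 / C + 2 / C ^ 2 ≤ 1`.
lemma norm_iteratedFDeriv_le_of_fderiv_eq_sq_smul {f : E → ℝ} (hf : ContDiff ℝ ∞ f)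
    {L : E →L[ℝ] E →L[ℝ] ℝ} (hfL : fderiv ℝ f = fun y => (f y * f y) • L y) (hL : ‖L‖ ≤ 2)
    {x : E} {s : ℝ} (hs : 0 ≤ s) (hfx : ‖f x‖ ≤ s ^ 2) (hLx : ‖L x‖ * s ≤ 2) (n : ℕ) :
    ‖iteratedFDeriv ℝ n f x‖ ≤ n ! * 4 ^ n * s ^ (n + 2) := by
  induction n using Nat.strong_induction_on with
  | _ n ih =>
  rcases n with _ | n
  · simpa using hfx
  have sq_le (k : ℕ) (hk : k ≤ n) : ‖iteratedFDeriv ℝ k (fun y => f y * f y) x‖ ≤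
      (k + 1)! * 4 ^ k * s ^ (k + 4) := by
    have f_le (l : ℕ) (hl : l ≤ k) : ‖iteratedFDeriv ℝ l f x‖ ≤ s ^ 2 * (4 * s) ^ l * l ! :=
      (ih l (by omega)).trans_eq (by ring)
    exact (norm_iteratedFDeriv_mul_le_of_le hf hf f_le f_le).trans_eq (by ring)
  have pred_le : n * ‖iteratedFDeriv ℝ (n - 1) (fun y => f y * f y) x‖ ≤
      (n + 1)! * 4 ^ n / 4 * s ^ (n + 3) := by
    rcases n with _ | n
    · simp only [Nat.cast_zero, zero_mul]
      positivity
    · calc ((n + 1 : ℕ) : ℝ) * ‖iteratedFDeriv ℝ n (fun y => f y * f y) x‖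
          ≤ ((n + 2 : ℕ) : ℝ) * ((n + 1)! * 4 ^ n * s ^ (n + 4)) := by
            gcongr
            exacts [one_le_two, sq_le n n.le_succ]
        _ = (n + 2)! * 4 ^ (n + 1) / 4 * s ^ (n + 1 + 3) := by
            rw [Nat.factorial_succ (n + 1)]
            push_cast
            ring
  rw [← norm_iteratedFDeriv_fderiv, hfL]
  calc ‖iteratedFDeriv ℝ n (fun y => (f y * f y) • L y) x‖
      ≤ ‖iteratedFDeriv ℝ n (fun y => f y * f y) x‖ * ‖L x‖ +
          n * ‖iteratedFDeriv ℝ (n - 1) (fun y => f y * f y) x‖ * ‖L‖ :=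
        norm_iteratedFDeriv_smul_clm_le (hf.mul hf) L x n
    _ ≤ (n + 1)! * 4 ^ n * s ^ (n + 4) * ‖L x‖ + (n + 1)! * 4 ^ n / 4 * s ^ (n + 3) * 2 := by
        gcongr
        exact sq_le n le_rfl
    _ = (n + 1)! * 4 ^ n * s ^ (n + 3) * (‖L x‖ * s + 1 / 2) := by ring
    _ ≤ (n + 1)! * 4 ^ n * s ^ (n + 3) * 4 := by
        gcongr
        linarith
    _ = (n + 1)! * 4 ^ (n + 1) * s ^ (n + 1 + 2) := by ring

lemma iteratedFDeriv_comp_clm_sub {g : F → ℝ} (hg : ContDiff ℝ ∞ g) (L : E →L[ℝ] F) (p : F) (n : ℕ)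
    (x : E) :
    iteratedFDeriv ℝ n (fun y => g (L y - p)) x =
      (iteratedFDeriv ℝ n g (L x - p)).compContinuousLinearMap fun _ => L := by
  have translate : ContDiff ℝ ∞ fun z => g (z - p) := hg.comp (contDiff_id.sub contDiff_const)
  rw [← iteratedFDeriv_comp_sub n p]
  exact L.iteratedFDeriv_comp_right translate x (mod_cast le_top)

end Leibniz

section PowerSeries

lemma iteratedDeriv_zero_eq_of_hasSum {f : ℝ → ℝ} {a : ℕ → ℝ}
    (h : ∀ᶠ t in 𝓝 (0 : ℝ), HasSum (fun n => a n * t ^ n) (f t)) (n : ℕ) :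
    iteratedDeriv n f 0 = n ! * a n := by
  have series : HasFPowerSeriesAt f (.ofScalars ℝ a) 0 := by
    rw [hasFPowerSeriesAt_iff]
    simpa [FormalMultilinearSeries.coeff_ofScalars, mul_comm] using h
  obtain ⟨r, series⟩ := series
  rw [iteratedDeriv_eq_iteratedFDeriv, ← series.factorial_smul]
  simp [FormalMultilinearSeries.ofScalars]

lemma hasSum_inv_one_add_mul_sq {c t : ℝ} (h : |c * t ^ 2| < 1) :
    HasSum (fun n => (if Even n then (-c) ^ (n / 2) else 0) * t ^ n) (1 + c * t ^ 2)⁻¹ := by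
  have geometric : HasSum (fun k : ℕ => (-(c * t ^ 2)) ^ k) (1 + c * t ^ 2)⁻¹ := by
    rw [← sub_neg_eq_add]
    exact hasSum_geometric_of_abs_lt_one (by rwa [abs_neg])
  rw [← add_zero (_⁻¹)]
  refine HasSum.even_add_odd ?_ ?_
  · convert geometric using 2 with k
    rw [if_pos (even_two_mul k), Nat.mul_div_cancel_left k two_pos, pow_mul, ← mul_pow, neg_mul]
  · convert hasSum_zero using 2 with k
    rw [if_neg (Nat.not_even_two_mul_add_one k), zero_mul]

end PowerSeries

section Lorentzian

variable {E : Type*} [NormedAddCommGroup E]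

/-- The Lorentzian (or Cauchy) kernel `1 / (1 + ‖x‖²)`, from which all the terms of the base
function are obtained by linear changes of variable. -/
def lorentzian (x : E) : ℝ := (1 + ‖x‖ ^ 2)⁻¹

lemma lorentzian_nonneg (x : E) : 0 ≤ lorentzian x := by
  unfold lorentzian
  positivity

lemma lorentzian_le_one (x : E) : lorentzian x ≤ 1 :=
  inv_le_one_of_one_le₀ (le_add_of_nonneg_right (by positivity))

lemma norm_mul_sqrt_lorentzian_le_one (x : E) : ‖x‖ * √(lorentzian x) ≤ 1 := by
  rw [lorentzian, Real.sqrt_inv, ← div_eq_mul_inv, div_le_one (by positivity)]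
  exact Real.le_sqrt_of_sq_le (by linarith)

variable [InnerProductSpace ℝ E]

lemma contDiff_lorentzian : ContDiff ℝ ∞ (lorentzian : E → ℝ) :=
  (contDiff_const.add (contDiff_norm_sq ℝ)).inv fun x => by positivity

lemma fderiv_lorentzian :
    fderiv ℝ (lorentzian : E → ℝ) =
      fun x => (lorentzian x * lorentzian x) • ((-2 : ℝ) • (innerSL ℝ : E →L[ℝ] E →L[ℝ] ℝ)) x := by
  funext x
  have chain_rule := (hasDerivAt_inv (by positivity : 1 + ‖x‖ ^ 2 ≠ 0)).comp_hasFDerivAt x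
    ((hasStrictFDerivAt_norm_sq x).hasFDerivAt.const_add 1)
  refine chain_rule.fderiv.trans ?_
  ext v
  simp only [lorentzian, smul_apply, coe_innerSL_apply, smul_eq_mul, nsmul_eq_mul]
  field_simp
  push_cast
  ring

lemma norm_iteratedFDeriv_lorentzian_le (n : ℕ) (x : E) :
    ‖iteratedFDeriv ℝ n lorentzian x‖ ≤ n ! * 4 ^ n * √(lorentzian x) ^ (n + 2) := by
  have norm_apply (y : E) : ‖((-2 : ℝ) • (innerSL ℝ : E →L[ℝ] E →L[ℝ] ℝ)) y‖ = 2 * ‖y‖ := by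
    rw [smul_apply, norm_smul, innerSL_apply_norm, Real.norm_eq_abs, abs_neg, abs_two]
  refine norm_iteratedFDeriv_le_of_fderiv_eq_sq_smul contDiff_lorentzian fderiv_lorentzian
    (ContinuousLinearMap.opNorm_le_bound _ zero_le_two fun y => (norm_apply y).le)
    (Real.sqrt_nonneg _) ?_ ?_ n
  · rw [Real.sq_sqrt (lorentzian_nonneg x), Real.norm_of_nonneg (lorentzian_nonneg x)]
  · rw [norm_apply, mul_assoc]
    linarith [norm_mul_sqrt_lorentzian_le_one x]

lemma iteratedFDeriv_lorentzian_zero (n : ℕ) (v : E) :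
    iteratedFDeriv ℝ (2 * n) lorentzian (0 : E) (fun _ => v) =
      (-1) ^ n * (2 * n)! * ‖v‖ ^ (2 * n) := by
  have series : ∀ᶠ t in 𝓝 (0 : ℝ),
      HasSum (fun k => (if Even k then (-‖v‖ ^ 2) ^ (k / 2) else 0) * t ^ k)
        (lorentzian (t • v)) := by
    have small : ∀ᶠ t in 𝓝 (0 : ℝ), |‖v‖ ^ 2 * t ^ 2| < 1 :=
      (show Continuous fun t : ℝ => |‖v‖ ^ 2 * t ^ 2| by
        fun_prop).continuousAt.eventually_lt_const (by simp)
    filter_upwards [small] with t ht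
    rw [lorentzian, norm_smul, mul_pow, Real.norm_eq_abs, sq_abs, mul_comm (t ^ 2)]
    exact hasSum_inv_one_add_mul_sq ht
  have along_line : iteratedDeriv (2 * n) (fun t : ℝ => lorentzian (t • v)) 0 =
      iteratedFDeriv ℝ (2 * n) lorentzian (0 : E) (fun _ => v) := by
    have comp_right := (ContinuousLinearMap.toSpanSingleton ℝ v).iteratedFDeriv_comp_right
      contDiff_lorentzian 0 (WithTop.coe_le_coe.2 le_top : ((2 * n : ℕ) : ℕ∞ω) ≤ ∞)
    rw [iteratedDeriv_eq_iteratedFDeriv]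
    simpa [Function.comp_def] using congrArg (fun m => m fun _ => 1) comp_right
  rw [← along_line, iteratedDeriv_zero_eq_of_hasSum series, if_pos (even_two_mul n),
    Nat.mul_div_cancel_left n two_pos, neg_pow, ← pow_mul]
  ring

end Lorentzian

section PartialDerivatives

/-- The directions `(1, 0)`, `i` times, followed by `(0, 1)`, `j` times: the arguments at which the
iterated Fréchet derivative of order `j + i` is the partial derivative `pd (i, j)`. The order is
written `j + i` so that each further `pd1` prepends a direction definitionally. -/
def partialDirs : (i j : ℕ) → Fin (j + i) → ℝ × ℝ
  | 0, _ => fun _ => (0, 1)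
  | i + 1, j => Fin.cons (1, 0) (partialDirs i j)

lemma prod_partialDirs {R : Type*} [CommMonoid R] (a : ℝ × ℝ → R) (i j : ℕ) :
    ∏ l, a (partialDirs i j l) = a (1, 0) ^ i * a (0, 1) ^ j := by
  induction i with
  | zero => simp [partialDirs]
  | succ i ih =>
    refine (Fin.prod_univ_succ (n := j + i) _).trans ?_
    simp only [partialDirs, Fin.cons_zero, Fin.cons_succ, ih]
    rw [pow_succ', mul_assoc]

lemma pd_eq_iteratedFDeriv {f : ℝ × ℝ → ℝ} (hf : ContDiff ℝ ∞ f) (i j : ℕ) (x : ℝ × ℝ) :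
    pd (i, j) f x = iteratedFDeriv ℝ (j + i) f x (partialDirs i j) := by
  have fderiv_apply (n : ℕ) (m : Fin n → ℝ × ℝ) (v y : ℝ × ℝ) :
      fderiv ℝ (fun z => iteratedFDeriv ℝ n f z m) y v =
        iteratedFDeriv ℝ (n + 1) f y (Fin.cons v m) := by
    have differentiable : DifferentiableAt ℝ (iteratedFDeriv ℝ n f) y :=
      hf.differentiable_iteratedFDeriv (mod_cast WithTop.coe_lt_top _) y
    rw [differentiable.iteratedFDeriv_succ_apply_left', Fin.cons_zero, Fin.tail_cons]
  have pd2_iterate : pd2^[j] f = fun y => iteratedFDeriv ℝ j f y fun _ => (0, 1) := by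
    induction j with
    | zero => ext; simp
    | succ j ih =>
      rw [Function.iterate_succ_apply', ih]
      ext y
      refine (fderiv_apply ..).trans (congrArg _ (funext fun l => ?_))
      cases l using Fin.cases <;> simp
  suffices pd (i, j) f = fun y => iteratedFDeriv ℝ (j + i) f y (partialDirs i j) from
    congrFun this x
  induction i with
  | zero => exact pd2_iterate
  | succ i ih =>
    simp only [pd, Function.iterate_succ_apply'] at ih ⊢
    rw [ih]
    exact funext fun y => fderiv_apply ..

lemma pd_const_smul {f : ℝ × ℝ → ℝ} (hf : ContDiff ℝ ∞ f) (c : ℝ) (i j : ℕ) (x : ℝ × ℝ) :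
    pd (i, j) (c • f) x = c * pd (i, j) f x := by
  have smooth : ContDiff ℝ ∞ (c • f) := hf.const_smul c
  rw [pd_eq_iteratedFDeriv hf, pd_eq_iteratedFDeriv smooth,
    iteratedFDeriv_const_smul_apply (hf.of_le (mod_cast le_top)).contDiffAt]
  rfl

lemma hasSum_pd_tsum {ι : Type*} {F : ι → ℝ × ℝ → ℝ} {u : ℕ → ι → ℝ}
    (hF : ∀ k, ContDiff ℝ ∞ (F k)) (hu : ∀ n, Summable (u n))
    (hFu : ∀ n k x, ‖iteratedFDeriv ℝ n (F k) x‖ ≤ u n k) (i j : ℕ) (x : ℝ × ℝ) :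
    HasSum (fun k => pd (i, j) (F k) x) (pd (i, j) (fun y => ∑' k, F k y) x) := by
  have smooth : ContDiff ℝ ∞ fun y => ∑' k, F k y :=
    contDiff_tsum hF (fun n _ => hu n) fun n k y _ => hFu n k y
  have summable : Summable fun k => iteratedFDeriv ℝ (j + i) (F k) x :=
    Summable.of_norm_bounded (hu _) fun k => hFu _ k x
  rw [pd_eq_iteratedFDeriv smooth, iteratedFDeriv_tsum_apply (N := ⊤) hF (fun n _ => hu n)
    (fun n k y _ => hFu n k y) (mod_cast le_top)]
  simp only [pd_eq_iteratedFDeriv (hF _)]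
  exact ContinuousMultilinearMap.hasSum_eval summable.hasSum _

end PartialDerivatives

section ScaledLorentzian

/-- The map `(x₁, x₂) ↦ (a x₁, b x₂)` from `ℝ × ℝ`, whose norm is the supremum norm, to the
Euclidean plane. -/
def diagScaling (a b : ℝ) : ℝ × ℝ →L[ℝ] WithLp 2 (ℝ × ℝ) :=
  (WithLp.prodContinuousLinearEquiv 2 ℝ ℝ ℝ).symm ∘L
    ((a • ContinuousLinearMap.fst ℝ ℝ ℝ).prod (b • ContinuousLinearMap.snd ℝ ℝ ℝ))

/-- The Lorentzian kernel `x ↦ 1 / (1 + ‖(a x₁, b x₂) - p‖²)`, the shape of the terms of the base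
function after rescaling. -/
def scaledLorentzian (a b : ℝ) (p : WithLp 2 (ℝ × ℝ)) (x : ℝ × ℝ) : ℝ :=
  lorentzian (diagScaling a b x - p)

variable (a b : ℝ)

lemma diagScaling_apply (x : ℝ × ℝ) : diagScaling a b x = WithLp.toLp 2 (a * x.1, b * x.2) := rfl

lemma norm_diagScaling_fst : ‖diagScaling a b (1, 0)‖ = |a| := by simp [diagScaling_apply]

lemma norm_diagScaling_snd : ‖diagScaling a b (0, 1)‖ = |b| := by simp [diagScaling_apply]

lemma norm_diagScaling_le : ‖diagScaling a b‖ ≤ |a| + |b| := by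
  refine (diagScaling a b).opNorm_le_bound (by positivity) fun x => ?_
  have decompose :
      diagScaling a b x = x.1 • diagScaling a b (1, 0) + x.2 • diagScaling a b (0, 1) := by
    rw [← map_smul, ← map_smul, ← map_add]
    simp
  calc ‖diagScaling a b x‖ ≤ ‖x.1‖ * |a| + ‖x.2‖ * |b| := by
        rw [decompose, ← norm_diagScaling_fst a b, ← norm_diagScaling_snd a b, ← norm_smul,
          ← norm_smul]
        exact norm_add_le _ _
    _ ≤ ‖x‖ * |a| + ‖x‖ * |b| := by
        gcongr
        exacts [norm_fst_le x, norm_snd_le x]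
    _ = (|a| + |b|) * ‖x‖ := by ring

lemma scaledLorentzian_toLp (q r : ℝ) (x : ℝ × ℝ) :
    scaledLorentzian a b (WithLp.toLp 2 (q, r)) x =
      (1 + ((a * x.1 - q) ^ 2 + (b * x.2 - r) ^ 2))⁻¹ := by
  rw [scaledLorentzian, lorentzian, WithLp.prod_norm_sq_eq_of_L2]
  simp [diagScaling_apply]

variable (p : WithLp 2 (ℝ × ℝ))

lemma contDiff_scaledLorentzian : ContDiff ℝ ∞ (scaledLorentzian a b p) :=
  contDiff_lorentzian.comp ((diagScaling a b).contDiff.sub contDiff_const)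

lemma iteratedFDeriv_scaledLorentzian (n : ℕ) (x : ℝ × ℝ) :
    iteratedFDeriv ℝ n (scaledLorentzian a b p) x =
      (iteratedFDeriv ℝ n lorentzian (diagScaling a b x - p)).compContinuousLinearMap
        fun _ => diagScaling a b :=
  iteratedFDeriv_comp_clm_sub contDiff_lorentzian _ p n x

lemma norm_iteratedFDeriv_scaledLorentzian_le (n : ℕ) (x : ℝ × ℝ) :
    ‖iteratedFDeriv ℝ n (scaledLorentzian a b p) x‖ ≤ n ! * 4 ^ n * (|a| + |b|) ^ n := by
  rw [iteratedFDeriv_scaledLorentzian]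
  refine (ContinuousMultilinearMap.norm_compContinuousLinearMap_le _ _).trans ?_
  rw [Fin.prod_const]
  gcongr
  · refine (norm_iteratedFDeriv_lorentzian_le _ _).trans (mul_le_of_le_one_right (by positivity) ?_)
    exact pow_le_one₀ (Real.sqrt_nonneg _) (Real.sqrt_le_one.2 (lorentzian_le_one _))
  · exact norm_diagScaling_le a b

lemma pd_scaledLorentzian (i j : ℕ) (x : ℝ × ℝ) :
    pd (i, j) (scaledLorentzian a b p) x =
      iteratedFDeriv ℝ (j + i) lorentzian (diagScaling a b x - p)
        fun l => diagScaling a b (partialDirs i j l) := by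
  rw [pd_eq_iteratedFDeriv (contDiff_scaledLorentzian a b p), iteratedFDeriv_scaledLorentzian]
  rfl

lemma abs_pd_scaledLorentzian_le (i j : ℕ) (x : ℝ × ℝ) :
    |pd (i, j) (scaledLorentzian a b p) x| ≤
      (j + i)! * 4 ^ (j + i) * √(scaledLorentzian a b p x) ^ (j + i + 2) *
        (|a| ^ i * |b| ^ j) := by
  rw [pd_scaledLorentzian, ← norm_diagScaling_fst a b, ← norm_diagScaling_snd a b,
    ← prod_partialDirs (fun v => ‖diagScaling a b v‖)]
  exact (ContinuousMultilinearMap.le_opNorm _ _).trans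
    (mul_le_mul_of_nonneg_right (norm_iteratedFDeriv_lorentzian_le _ _) (by positivity))

lemma pd_scaledLorentzian_center {x : ℝ × ℝ} (hx : diagScaling a b x = p) (n : ℕ) :
    pd (0, 2 * n) (scaledLorentzian a b p) x = (-1) ^ n * (2 * n)! * b ^ (2 * n) := by
  rw [pd_scaledLorentzian, hx, sub_self]
  refine (iteratedFDeriv_lorentzian_zero n (diagScaling a b (0, 1))).trans ?_
  rw [norm_diagScaling_snd, (even_two_mul n).pow_abs]

end ScaledLorentzian

section Weights

/-- The ratio `m k = M (k + 1) / M k` of consecutive terms of the sequence `M`. -/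
def growthRatio (M : ℕ → ℝ) (k : ℕ) : ℝ := M (k + 1) / M k

/-- The weight `(m k)² / (2 ^ k φ(m k))` of the `k`-th term of the base function, `φ` being
`ostrowski M`. -/
def blockWeight (M : ℕ → ℝ) (k : ℕ) : ℝ :=
  growthRatio M k ^ 2 / (2 ^ k * ostrowski M (growthRatio M k))

variable {M : ℕ → ℝ}

lemma growthRatio_pos (hMpos : ∀ k, 0 < M k) (k : ℕ) : 0 < growthRatio M k :=
  div_pos (hMpos _) (hMpos _)

lemma one_le_growthRatio (hMpos : ∀ k, 0 < M k) (hMmono : Monotone M) (k : ℕ) :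
    1 ≤ growthRatio M k :=
  (one_le_div (hMpos k)).2 (hMmono k.le_succ)

-- Raising `n` by one multiplies the left side by `m k / m n`, which is at least `1` up to `n = k`
-- and at most `1` from then on.
lemma growthRatio_pow_div_le (hMpos : ∀ k, 0 < M k) (hMlc : LogConvexSeq M) (k n : ℕ) :
    growthRatio M k ^ n / M n ≤ growthRatio M k ^ k / M k := by
  have succ_eq (l : ℕ) : growthRatio M k ^ (l + 1) / M (l + 1) =
      growthRatio M k ^ l / M l * (growthRatio M k / growthRatio M l) := by
    have := (hMpos l).ne'
    have := (hMpos (l + 1)).ne'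
    rw [growthRatio.eq_def M l, pow_succ]
    field_simp
  have term_nonneg (l : ℕ) : 0 ≤ growthRatio M k ^ l / M l :=
    div_nonneg (pow_nonneg (growthRatio_pos hMpos k).le l) (hMpos l).le
  rcases le_total n k with hnk | hkn
  · refine monotoneOn_of_le_succ (s := Set.Iic k) (f := fun l => growthRatio M k ^ l / M l)
      Set.ordConnected_Iic (fun l _ hl _ => ?_) hnk (Set.mem_Iic.2 le_rfl) hnk
    refine (le_mul_of_one_le_right (term_nonneg l) ?_).trans_eq (succ_eq l).symm
    exact (one_le_div (growthRatio_pos hMpos l)).2 (hMlc hl)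
  · refine antitoneOn_of_succ_le (s := Set.Ici k) (f := fun l => growthRatio M k ^ l / M l)
      Set.ordConnected_Ici (fun l _ hl _ => ?_) (Set.mem_Ici.2 le_rfl) hkn hkn
    refine (succ_eq l).trans_le (mul_le_of_le_one_right (term_nonneg l) ?_)
    exact (div_le_one (growthRatio_pos hMpos l)).2 (hMlc hl)

lemma ostrowski_growthRatio (hMpos : ∀ k, 0 < M k) (hMlc : LogConvexSeq M) (k : ℕ) :
    ostrowski M (growthRatio M k) = growthRatio M k ^ (k + 2) / M k := by
  have greatest : IsGreatest (Set.range fun n => growthRatio M k ^ (n + 2) / M n)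
      (growthRatio M k ^ (k + 2) / M k) := by
    refine ⟨⟨k, rfl⟩, ?_⟩
    rintro _ ⟨n, rfl⟩
    have := mul_le_mul_of_nonneg_right (growthRatio_pow_div_le hMpos hMlc k n)
      (sq_nonneg (growthRatio M k))
    simpa only [div_mul_eq_mul_div, ← pow_add] using this
  exact greatest.csSup_eq

lemma blockWeight_eq (hMpos : ∀ k, 0 < M k) (hMlc : LogConvexSeq M) (k : ℕ) :
    blockWeight M k = M k / growthRatio M k ^ k * (1 / 2) ^ k := by
  have := (growthRatio_pos hMpos k).ne'
  have := (hMpos k).ne'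
  rw [blockWeight, ostrowski_growthRatio hMpos hMlc, one_div_pow, pow_add]
  field_simp

lemma blockWeight_nonneg (hMpos : ∀ k, 0 < M k) (hMlc : LogConvexSeq M) (k : ℕ) :
    0 ≤ blockWeight M k := by
  have := growthRatio_pos hMpos k
  have := hMpos k
  rw [blockWeight_eq hMpos hMlc]
  positivity

lemma blockWeight_mul_pow_le (hMpos : ∀ k, 0 < M k) (hMlc : LogConvexSeq M) (k n : ℕ) :
    blockWeight M k * growthRatio M k ^ n ≤ M n * (1 / 2) ^ k := by
  have ratio_pow_pos := pow_pos (growthRatio_pos hMpos k) k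
  rw [blockWeight_eq hMpos hMlc, mul_right_comm]
  gcongr
  rw [div_mul_eq_mul_div, div_le_iff₀ ratio_pow_pos, ← div_le_iff₀' (hMpos n), mul_div_assoc,
    ← le_div_iff₀' (hMpos k)]
  exact growthRatio_pow_div_le hMpos hMlc k n

end Weights

section BuildingBlock

/-- The `k`-th term of the base function, evaluated at `x / ρ - (q, 0)`. -/
def blockTerm (M : ℕ → ℝ) (q ρ : ℝ) (k : ℕ) : ℝ × ℝ → ℝ :=
  blockWeight M k • scaledLorentzian ρ⁻¹ (growthRatio M k / ρ) (WithLp.toLp 2 (q, 0))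

/-- The function `x ↦ h (x / ρ - (q, 0))`, where `h` is the base function with a term `k = 0` added
to its series: summed from `k = 1`, the series can be less than `M 0` at `(q * ρ, 0)`, which is the
lower bound required there for `n = 0`. -/
def buildingBlock (M : ℕ → ℝ) (q ρ : ℝ) (x : ℝ × ℝ) : ℝ := ∑' k, blockTerm M q ρ k x

variable {M : ℕ → ℝ} {ρ : ℝ}

lemma contDiff_blockTerm (M : ℕ → ℝ) (q ρ : ℝ) (k : ℕ) : ContDiff ℝ ∞ (blockTerm M q ρ k) :=
  contDiff_const.smul (contDiff_scaledLorentzian _ _ _)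

lemma pd_blockTerm (M : ℕ → ℝ) (q ρ : ℝ) (i j k : ℕ) (x : ℝ × ℝ) :
    pd (i, j) (blockTerm M q ρ k) x = blockWeight M k *
      pd (i, j) (scaledLorentzian ρ⁻¹ (growthRatio M k / ρ) (WithLp.toLp 2 (q, 0))) x :=
  pd_const_smul (contDiff_scaledLorentzian _ _ _) _ i j x

lemma norm_iteratedFDeriv_blockTerm_le (hMpos : ∀ k, 0 < M k) (hMmono : Monotone M)
    (hMlc : LogConvexSeq M) (hρ : 0 < ρ) (q : ℝ) (n k : ℕ) (x : ℝ × ℝ) :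
    ‖iteratedFDeriv ℝ n (blockTerm M q ρ k) x‖ ≤ n ! * (8 / ρ) ^ n * M n * (1 / 2) ^ k := by
  set m := growthRatio M k
  have one_le_m : 1 ≤ m := one_le_growthRatio hMpos hMmono k
  have weight_nonneg := blockWeight_nonneg hMpos hMlc k
  have scale_le : |ρ⁻¹| + |m / ρ| ≤ 2 * m / ρ := by
    rw [abs_of_pos (inv_pos.2 hρ), abs_of_pos (by positivity), inv_eq_one_div, ← add_div]
    gcongr
    linarith
  rw [blockTerm, iteratedFDeriv_const_smul_apply
    ((contDiff_scaledLorentzian _ _ _).of_le (mod_cast le_top)).contDiffAt, norm_smul,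
    Real.norm_of_nonneg weight_nonneg]
  calc blockWeight M k *
        ‖iteratedFDeriv ℝ n (scaledLorentzian ρ⁻¹ (m / ρ) (WithLp.toLp 2 (q, 0))) x‖
      ≤ blockWeight M k * (n ! * 4 ^ n * (2 * m / ρ) ^ n) := by
        gcongr
        exact (norm_iteratedFDeriv_scaledLorentzian_le _ _ _ n x).trans (by gcongr)
    _ = n ! * (8 / ρ) ^ n * (blockWeight M k * m ^ n) := by
        rw [show (8 : ℝ) / ρ = 4 * (2 / ρ) by ring, mul_pow, mul_div_right_comm, mul_pow]
        ring
    _ ≤ n ! * (8 / ρ) ^ n * (M n * (1 / 2) ^ k) :=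
        mul_le_mul_of_nonneg_left (blockWeight_mul_pow_le hMpos hMlc k n) (by positivity)
    _ = n ! * (8 / ρ) ^ n * M n * (1 / 2) ^ k := by ring

lemma sqrt_scaledLorentzian_le {m : ℝ} (hρ : 0 < ρ) (hm : 1 ≤ m) (q : ℝ) (x : ℝ × ℝ) :
    √(scaledLorentzian ρ⁻¹ (m / ρ) (WithLp.toLp 2 (q, 0)) x) ≤
      ρ / √((x.1 - q * ρ) ^ 2 + x.2 ^ 2 + ρ ^ 2) := by
  refine Real.sqrt_le_iff.2 ⟨by positivity, ?_⟩
  rw [div_pow, Real.sq_sqrt (by positivity), scaledLorentzian_toLp,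
    inv_le_comm₀ (by positivity) (by positivity), inv_div, div_le_iff₀ (by positivity)]
  have clear_denominators : (1 + ((ρ⁻¹ * x.1 - q) ^ 2 + (m / ρ * x.2 - 0) ^ 2)) * ρ ^ 2 =
      ρ ^ 2 + (x.1 - q * ρ) ^ 2 + m ^ 2 * x.2 ^ 2 := by
    field_simp
    ring
  have : x.2 ^ 2 ≤ m ^ 2 * x.2 ^ 2 := le_mul_of_one_le_left (sq_nonneg _) (one_le_pow₀ hm)
  linarith

lemma factorial_add_le_two_pow_mul (i j : ℕ) : ((i + j)! : ℝ) ≤ 2 ^ (i + j) * (i ! * j !) := by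
  rw [← Nat.add_choose_mul_factorial_mul_factorial]
  push_cast
  rw [mul_assoc]
  gcongr
  exact_mod_cast Nat.choose_le_two_pow _ _

lemma abs_pd_blockTerm_le (hMpos : ∀ k, 0 < M k) (hMmono : Monotone M)
    (hMlc : LogConvexSeq M) (hρ : 0 < ρ) (q : ℝ) (i j k : ℕ) (x : ℝ × ℝ) :
    |pd (i, j) (blockTerm M q ρ k) x| ≤ ρ ^ 2 * 8 ^ (i + j) * (i ! * j !) * M j /
      √((x.1 - q * ρ) ^ 2 + x.2 ^ 2 + ρ ^ 2) ^ (i + j + 2) * (1 / 2) ^ k := by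
  set T := (x.1 - q * ρ) ^ 2 + x.2 ^ 2 + ρ ^ 2
  set m := growthRatio M k
  have m_pos : 0 < m := growthRatio_pos hMpos k
  have weight_nonneg := blockWeight_nonneg hMpos hMlc k
  rw [pd_blockTerm, abs_mul, abs_of_nonneg weight_nonneg]
  calc blockWeight M k *
        |pd (i, j) (scaledLorentzian ρ⁻¹ (m / ρ) (WithLp.toLp 2 (q, 0))) x|
      ≤ blockWeight M k * ((j + i)! * 4 ^ (j + i) * (ρ / √T) ^ (j + i + 2) *
          (|ρ⁻¹| ^ i * |m / ρ| ^ j)) := by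
        gcongr
        refine (abs_pd_scaledLorentzian_le _ _ _ i j x).trans ?_
        gcongr
        exact sqrt_scaledLorentzian_le hρ (one_le_growthRatio hMpos hMmono k) q x
    _ = ρ ^ 2 * 4 ^ (i + j) / √T ^ (i + j + 2) * (i + j)! * (blockWeight M k * m ^ j) := by
        rw [abs_of_pos (inv_pos.2 hρ), abs_of_pos (div_pos m_pos hρ), add_comm j i, div_pow,
          div_pow, inv_pow, pow_add ρ, pow_add ρ]
        field_simp
    _ ≤ ρ ^ 2 * 4 ^ (i + j) / √T ^ (i + j + 2) * (2 ^ (i + j) * (i ! * j !)) *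
          (M j * (1 / 2) ^ k) := by
        refine mul_le_mul ?_ (blockWeight_mul_pow_le hMpos hMlc k j) (by positivity) (by positivity)
        gcongr
        exact factorial_add_le_two_pow_mul i j
    _ = ρ ^ 2 * 8 ^ (i + j) * (i ! * j !) * M j / √T ^ (i + j + 2) * (1 / 2) ^ k := by
        rw [show (8 : ℝ) = 4 * 2 by norm_num, mul_pow]
        ring

lemma pd_blockTerm_center (M : ℕ → ℝ) (q : ℝ) (hρ : ρ ≠ 0) (n k : ℕ) :
    pd (0, 2 * n) (blockTerm M q ρ k) (q * ρ, 0) =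
      (-1) ^ n * (blockWeight M k * (2 * n)! * (growthRatio M k / ρ) ^ (2 * n)) := by
  rw [pd_blockTerm, pd_scaledLorentzian_center]
  · ring
  · rw [diagScaling_apply, mul_zero, mul_comm q, inv_mul_cancel_left₀ hρ]

lemma contDiff_buildingBlock (hMpos : ∀ k, 0 < M k) (hMmono : Monotone M)
    (hMlc : LogConvexSeq M) (hρ : 0 < ρ) (q : ℝ) : ContDiff ℝ ∞ (buildingBlock M q ρ) :=
  contDiff_tsum (contDiff_blockTerm M q ρ) (fun _ _ => summable_geometric_two.mul_left _)
    fun n k x _ => norm_iteratedFDeriv_blockTerm_le hMpos hMmono hMlc hρ q n k x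

lemma hasSum_pd_buildingBlock (hMpos : ∀ k, 0 < M k) (hMmono : Monotone M)
    (hMlc : LogConvexSeq M) (hρ : 0 < ρ) (q : ℝ) (i j : ℕ) (x : ℝ × ℝ) :
    HasSum (fun k => pd (i, j) (blockTerm M q ρ k) x) (pd (i, j) (buildingBlock M q ρ) x) :=
  hasSum_pd_tsum (contDiff_blockTerm M q ρ) (fun _ => summable_geometric_two.mul_left _)
    (norm_iteratedFDeriv_blockTerm_le hMpos hMmono hMlc hρ q) i j x

lemma abs_pd_buildingBlock_le (hMpos : ∀ k, 0 < M k) (hMmono : Monotone M)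
    (hMlc : LogConvexSeq M) (hρ : 0 < ρ) (q : ℝ) (i j : ℕ) (x : ℝ × ℝ) :
    |pd (i, j) (buildingBlock M q ρ) x| ≤ ρ ^ 2 * 8 ^ (i + j) * (i ! * j !) * M j /
      √((x.1 - q * ρ) ^ 2 + x.2 ^ 2 + ρ ^ 2) ^ (i + j + 2) * 2 :=
  (hasSum_pd_buildingBlock hMpos hMmono hMlc hρ q i j x).norm_le_of_bounded
    (hasSum_geometric_two.mul_left _) fun k => abs_pd_blockTerm_le hMpos hMmono hMlc hρ q i j k x

lemma le_abs_pd_buildingBlock_center (hMpos : ∀ k, 0 < M k) (hMmono : Monotone M)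
    (hMlc : LogConvexSeq M) (hρ : 0 < ρ) (q : ℝ) (n : ℕ) :
    (2 * n)! * M (2 * n) / (4 ^ n * ρ ^ (2 * n)) ≤
      |pd (0, 2 * n) (buildingBlock M q ρ) (q * ρ, 0)| := by
  have series : HasSum
      (fun k => blockWeight M k * (2 * n)! * (growthRatio M k / ρ) ^ (2 * n))
      ((-1) ^ n * pd (0, 2 * n) (buildingBlock M q ρ) (q * ρ, 0)) := by
    have := (hasSum_pd_buildingBlock hMpos hMmono hMlc hρ q 0 (2 * n) (q * ρ, 0)).mul_left
      ((-1) ^ n)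
    simpa only [pd_blockTerm_center M q hρ.ne', ← mul_assoc, ← mul_pow, neg_mul_neg, mul_one,
      one_pow, one_mul] using this
  have term_nonneg (k : ℕ) :
      0 ≤ blockWeight M k * (2 * n)! * (growthRatio M k / ρ) ^ (2 * n) :=
    mul_nonneg (mul_nonneg (blockWeight_nonneg hMpos hMlc k) (by positivity))
      ((even_two_mul n).pow_nonneg _)
  calc (2 * n)! * M (2 * n) / (4 ^ n * ρ ^ (2 * n))
      = blockWeight M (2 * n) * (2 * n)! * (growthRatio M (2 * n) / ρ) ^ (2 * n) := by
        have := (growthRatio_pos hMpos (2 * n)).ne'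
        rw [blockWeight_eq hMpos hMlc, show (4 : ℝ) = 2 ^ 2 by norm_num, ← pow_mul, one_div_pow,
          div_pow]
        field_simp
    _ ≤ (-1) ^ n * pd (0, 2 * n) (buildingBlock M q ρ) (q * ρ, 0) :=
        le_hasSum series _ fun k _ => term_nonneg k
    _ ≤ |pd (0, 2 * n) (buildingBlock M q ρ) (q * ρ, 0)| :=
        (le_abs_self _).trans_eq (by rw [abs_mul, abs_neg_one_pow, one_mul])

end BuildingBlock

theorem exists_building_block_general (M : ℕ → ℝ) (hMpos : ∀ k, 0 < M k) (hMmono : Monotone M)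
    (hMlc : LogConvexSeq M) (ρ q : ℝ) (hρ0 : 0 < ρ) :
    ∃ f : ℝ × ℝ → ℝ, ContDiff ℝ (⊤ : ℕ∞) f ∧
      (∀ x : ℝ × ℝ, ∀ α : ℕ × ℕ,
        |pd α f x| ≤ 64 * ρ ^ 2 * 8 ^ (α.1 + α.2 + 1) *
          (Nat.factorial α.1 * Nat.factorial α.2) * M α.2 /
          (((x.1 - q * ρ) ^ 2 + x.2 ^ 2) + ρ ^ 2) ^ (1 + ((α.1 + α.2 : ℕ) : ℝ) / 2)) ∧
      (∀ n : ℕ, (Nat.factorial (2 * n) : ℝ) * M (2 * n) / (4 ^ n * ρ ^ (2 * n)) ≤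
        |pd (0, 2 * n) f (q * ρ, 0)|) := by
  refine ⟨buildingBlock M q ρ, contDiff_buildingBlock hMpos hMmono hMlc hρ0 q, ?_,
    le_abs_pd_buildingBlock_center hMpos hMmono hMlc hρ0 q⟩
  rintro x ⟨i, j⟩
  refine (abs_pd_buildingBlock_le hMpos hMmono hMlc hρ0 q i j x).trans ?_
  dsimp only
  set T := (x.1 - q * ρ) ^ 2 + x.2 ^ 2 + ρ ^ 2
  have T_nonneg : 0 ≤ T := by positivity
  have rpow_eq : T ^ (1 + ((i + j : ℕ) : ℝ) / 2) = √T ^ (i + j + 2) := by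
    rw [← Real.rpow_natCast, ← Real.rpow_div_two_eq_sqrt _ T_nonneg]
    congr 1
    push_cast
    ring
  have M_pos := hMpos j
  rw [rpow_eq, div_mul_eq_mul_div]
  refine div_le_div_of_nonneg_right ?_ (by positivity)
  have : 0 ≤ ρ ^ 2 * 8 ^ (i + j) * (i ! * j !) * M j := by positivity
  rw [pow_succ (8 : ℝ)]
  linarith

/-- Remark 3.7 (a priori estimates on the building block): for `0 < ρ < 1` and `q ≥ 1`
there is `f ∈ C^∞(ℝ²)` with
(i) `|∂^α f(x)| ≤ 64 ρ² 8^{|α|+1} α! M_{α₂}/(‖x - (qρ,0)‖² + ρ²)^{1+|α|/2}` and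
(ii) `|∂^{2n}f/∂x₂^{2n}(qρ,0)| ≥ (2n)! M_{2n}/(4^n ρ^{2n})`. -/
theorem exists_building_block (M : ℕ → ℝ) (hMpos : ∀ k, 0 < M k) (hMmono : Monotone M)
    (hMlc : LogConvexSeq M) (hM0 : M 0 = 1)
    (ρ q : ℝ) (hρ0 : 0 < ρ) (hρ1 : ρ < 1) (hq : 1 ≤ q) :
    ∃ f : ℝ × ℝ → ℝ, ContDiff ℝ (⊤ : ℕ∞) f ∧
      (∀ x : ℝ × ℝ, ∀ α : ℕ × ℕ,
        |pd α f x| ≤ 64 * ρ ^ 2 * 8 ^ (α.1 + α.2 + 1) *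
          (Nat.factorial α.1 * Nat.factorial α.2) * M α.2 /
          (((x.1 - q * ρ) ^ 2 + x.2 ^ 2) + ρ ^ 2) ^ (1 + ((α.1 + α.2 : ℕ) : ℝ) / 2)) ∧
      (∀ n : ℕ, (Nat.factorial (2 * n) : ℝ) * M (2 * n) / (4 ^ n * ρ ^ (2 * n)) ≤
        |pd (0, 2 * n) f (q * ρ, 0)|) := by
  exact exists_building_block_general M hMpos hMmono hMlc ρ q hρ0
end
end

section
/- Let M = (M_k) be a nondecreasing logarithmically convex sequence of positive real numbers with M_0 = 1, let E : [0,∞) → [0,1) be an increasing continuous function with E(0) = 0 and lim_{r→0⁺} E(r)/r = ∞, set ρ_n := M_n/M_{n+1} and q_n := E(ρ_n)/ρ_n, and let Λ be an unbounded set of positive even integers with q_λ > 1 for all λ ∈ Λ. Then the function F_Γ(x) := Σ_{λ∈Λ} f_{q_λ,ρ_λ}(x)/(φ(ρ_λ^{−1})·2^λ) is C^∞ on ℝ² and satisfies |∂^α F_Γ(x)| ≤ 8^{|α|+3}·α!·M_{|α|}² for every x ∈ ℝ² and every multi-index α ∈ ℕ²; in particular F_Γ ∈ C_{M²}(ℝ²).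 -/
/-!
The kernel `K x = 1 / (x₁² + x₂² + 1)` satisfies `|∂^α K| ≤ 3^|α| α!` on all of `ℝ²`: applying `∂^α`
to `(x₁² + x₂² + 1) K = 1` expresses `∂^α K` through derivatives of orders `|α| - 1` and `|α| - 2`.
Every rescaling by a quotient `m_j = M (j+1) / M j` is paid for by the Ostrowski function, since
`m_j ^ (n+2) ≤ M n * φ(m_j)` for all `n`. In the base function `h` only the second variable is
rescaled, so `|∂^α h| ≤ 3^|α| α! M α₂`. In `F_Γ` both variables are rescaled by `m_l = 1 / ρ_l`,
which contributes at most `m_l ^ |α| / φ(m_l) ≤ M |α|` because `m_l ≥ 1`. The factors `2^{-k}` and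
`2^{-l}` make both series, together with all their termwise derivatives, converge uniformly on
`ℝ²`, and `|∂^α F_Γ| ≤ 2 * 3^|α| α! (M |α|)²`.
-/

open Real Filter Topology
open scoped Classical
noncomputable section
open scoped Nat ContDiff

/-! ### Iterated partial derivatives -/

section PartialDerivatives

variable {f g : ℝ × ℝ → ℝ}

lemma contDiff_pd1 {m n : WithTop ℕ∞} (hf : ContDiff ℝ n f) (hmn : m + 1 ≤ n) :
    ContDiff ℝ m (pd1 f) :=
  (hf.fderiv_right hmn).clm_apply contDiff_const

lemma contDiff_pd2 {m n : WithTop ℕ∞} (hf : ContDiff ℝ n f) (hmn : m + 1 ≤ n) :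
    ContDiff ℝ m (pd2 f) :=
  (hf.fderiv_right hmn).clm_apply contDiff_const

lemma fderiv_eq_pd1_smul_fst_add_pd2_smul_snd (f : ℝ × ℝ → ℝ) (x : ℝ × ℝ) :
    fderiv ℝ f x =
      pd1 f x • ContinuousLinearMap.fst ℝ ℝ ℝ + pd2 f x • ContinuousLinearMap.snd ℝ ℝ ℝ := by
  ext <;> simp [pd1, pd2]

lemma norm_fderiv_le_abs_pd1_add_abs_pd2 (f : ℝ × ℝ → ℝ) (x : ℝ × ℝ) :
    ‖fderiv ℝ f x‖ ≤ |pd1 f x| + |pd2 f x| := by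
  rw [fderiv_eq_pd1_smul_fst_add_pd2_smul_snd]
  refine (norm_add_le _ _).trans (add_le_add ?_ ?_) <;> rw [norm_smul, Real.norm_eq_abs]
  · exact mul_le_of_le_one_right (abs_nonneg _) (ContinuousLinearMap.norm_fst_le ℝ ℝ ℝ)
  · exact mul_le_of_le_one_right (abs_nonneg _) (ContinuousLinearMap.norm_snd_le ℝ ℝ ℝ)

lemma contDiff_succ_of_pd {n : ℕ} (hf : Differentiable ℝ f) (h₁ : ContDiff ℝ n (pd1 f))
    (h₂ : ContDiff ℝ n (pd2 f)) : ContDiff ℝ (n + 1) f := by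
  refine contDiff_succ_iff_fderiv.2 ⟨hf, by simp, ?_⟩
  rw [funext (fderiv_eq_pd1_smul_fst_add_pd2_smul_snd f)]
  exact (h₁.smul contDiff_const).add (h₂.smul contDiff_const)

lemma pd1_add (hf : Differentiable ℝ f) (hg : Differentiable ℝ g) :
    pd1 (fun x ↦ f x + g x) = fun x ↦ pd1 f x + pd1 g x := by
  funext x
  simp [pd1, fderiv_fun_add (hf x) (hg x)]

lemma pd2_add (hf : Differentiable ℝ f) (hg : Differentiable ℝ g) :
    pd2 (fun x ↦ f x + g x) = fun x ↦ pd2 f x + pd2 g x := by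
  funext x
  simp [pd2, fderiv_fun_add (hf x) (hg x)]

lemma pd1_const_mul (c : ℝ) (f : ℝ × ℝ → ℝ) : pd1 (fun x ↦ c * f x) = fun x ↦ c * pd1 f x := by
  have hsmul : fderiv ℝ (fun x ↦ c * f x) = c • fderiv ℝ f := fderiv_const_smul_field c
  funext x
  simp [pd1, hsmul]

lemma pd2_const_mul (c : ℝ) (f : ℝ × ℝ → ℝ) : pd2 (fun x ↦ c * f x) = fun x ↦ c * pd2 f x := by
  have hsmul : fderiv ℝ (fun x ↦ c * f x) = c • fderiv ℝ f := fderiv_const_smul_field c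
  funext x
  simp [pd2, hsmul]

lemma pd1_fst_mul (hf : Differentiable ℝ f) :
    pd1 (fun x ↦ x.1 * f x) = fun x ↦ f x + x.1 * pd1 f x := by
  funext x
  simp [pd1, fderiv_fun_mul differentiableAt_fst (hf x), fderiv_fst, add_comm]

lemma pd2_fst_mul (hf : Differentiable ℝ f) :
    pd2 (fun x ↦ x.1 * f x) = fun x ↦ x.1 * pd2 f x := by
  funext x
  simp [pd2, fderiv_fun_mul differentiableAt_fst (hf x), fderiv_fst]

lemma pd1_snd_mul (hf : Differentiable ℝ f) :
    pd1 (fun x ↦ x.2 * f x) = fun x ↦ x.2 * pd1 f x := by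
  funext x
  simp [pd1, fderiv_fun_mul differentiableAt_snd (hf x), fderiv_snd]

lemma pd2_snd_mul (hf : Differentiable ℝ f) :
    pd2 (fun x ↦ x.2 * f x) = fun x ↦ f x + x.2 * pd2 f x := by
  funext x
  simp [pd2, fderiv_fun_mul differentiableAt_snd (hf x), fderiv_snd, add_comm]

lemma fderiv_comp_affine (hf : Differentiable ℝ f) (r s p q : ℝ) (x v : ℝ × ℝ) :
    fderiv ℝ (fun x : ℝ × ℝ ↦ f (r * x.1 + p, s * x.2 + q)) x v =
      fderiv ℝ f (r * x.1 + p, s * x.2 + q) (r * v.1, s * v.2) := by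
  have haffine : HasFDerivAt (fun x : ℝ × ℝ ↦ (r * x.1 + p, s * x.2 + q))
      ((r • ContinuousLinearMap.fst ℝ ℝ ℝ).prod (s • ContinuousLinearMap.snd ℝ ℝ ℝ)) x :=
    ((hasFDerivAt_fst.const_mul r).add_const p).prodMk ((hasFDerivAt_snd.const_mul s).add_const q)
  have hcomp := ((hf _).hasFDerivAt.comp x haffine).fderiv
  rw [Function.comp_def] at hcomp
  simp [hcomp]

lemma pd1_comp_affine (hf : Differentiable ℝ f) (r s p q : ℝ) :
    pd1 (fun x : ℝ × ℝ ↦ f (r * x.1 + p, s * x.2 + q)) =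
      fun x ↦ r * pd1 f (r * x.1 + p, s * x.2 + q) := by
  funext x
  have hdir : ((r * 1, s * 0) : ℝ × ℝ) = r • (1, 0) := by simp
  rw [pd1, fderiv_comp_affine hf, hdir, map_smul, smul_eq_mul, pd1]

lemma pd2_comp_affine (hf : Differentiable ℝ f) (r s p q : ℝ) :
    pd2 (fun x : ℝ × ℝ ↦ f (r * x.1 + p, s * x.2 + q)) =
      fun x ↦ s * pd2 f (r * x.1 + p, s * x.2 + q) := by
  funext x
  have hdir : ((r * 0, s * 1) : ℝ × ℝ) = s • (0, 1) := by simp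
  rw [pd2, fderiv_comp_affine hf, hdir, map_smul, smul_eq_mul, pd2]

lemma pd2_pd1_comm (hf : ContDiff ℝ 2 f) : pd2 (pd1 f) = pd1 (pd2 f) := by
  funext x
  have hdiff : DifferentiableAt ℝ (fderiv ℝ f) x :=
    (hf.fderiv_right (m := 1) (by norm_num)).differentiable one_ne_zero x
  have hsymm : IsSymmSndFDerivAt ℝ f x :=
    hf.contDiffAt.isSymmSndFDerivAt (by simp)
  have hsnd (v w : ℝ × ℝ) :
      fderiv ℝ (fun y ↦ fderiv ℝ f y v) x w = fderiv ℝ (fderiv ℝ f) x w v := by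
    simp [fderiv_clm_apply hdiff (differentiableAt_const v)]
  calc pd2 (pd1 f) x = fderiv ℝ (fderiv ℝ f) x (0, 1) (1, 0) := hsnd _ _
    _ = fderiv ℝ (fderiv ℝ f) x (1, 0) (0, 1) := hsymm _ _
    _ = pd1 (pd2 f) x := (hsnd _ _).symm

lemma pd_succ_fst (a b : ℕ) (f : ℝ × ℝ → ℝ) : pd (a + 1, b) f = pd1 (pd (a, b) f) := by
  simp only [pd, Function.iterate_succ_apply']

lemma pd_zero_succ (b : ℕ) (f : ℝ × ℝ → ℝ) : pd (0, b + 1) f = pd2 (pd (0, b) f) := by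
  simp only [pd, Function.iterate_succ_apply', Function.iterate_zero, id]

-- In `pd` the derivatives in `x₂` are taken first, hence `a = 0` in `succ_snd`.
lemma multiindex_induction {P : ℕ → ℕ → Prop} (zero : P 0 0)
    (succ_snd : ∀ b, P 0 b → P 0 (b + 1)) (succ_fst : ∀ a b, P a b → P (a + 1) b) (a b : ℕ) :
    P a b := by
  induction a with
  | zero => exact Nat.rec zero succ_snd b
  | succ a ih => exact succ_fst a b ih

lemma contDiff_pd (hf : ContDiff ℝ ∞ f) (a b : ℕ) : ContDiff ℝ ∞ (pd (a, b) f) := by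
  induction a, b using multiindex_induction with
  | zero => exact hf
  | succ_snd b ih => rw [pd_zero_succ]; exact contDiff_pd2 ih le_rfl
  | succ_fst a b ih => rw [pd_succ_fst]; exact contDiff_pd1 ih le_rfl

lemma differentiable_pd (hf : ContDiff ℝ ∞ f) (a b : ℕ) : Differentiable ℝ (pd (a, b) f) :=
  (contDiff_pd hf a b).differentiable (by simp)

lemma pd_pd1 (hf : ContDiff ℝ ∞ f) (a b : ℕ) : pd (a, b) (pd1 f) = pd (a + 1, b) f := by
  induction a, b using multiindex_induction with
  | zero => rfl
  | succ_snd b ih =>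
    have hsmooth : ContDiff ℝ 2 (pd (0, b) f) :=
      (contDiff_pd hf 0 b).of_le (WithTop.coe_le_coe.2 le_top)
    rw [pd_zero_succ, ih, pd_succ_fst, pd2_pd1_comm hsmooth, ← pd_zero_succ, ← pd_succ_fst]
  | succ_fst a b ih => rw [pd_succ_fst, ih, ← pd_succ_fst]

lemma pd_pd2 (f : ℝ × ℝ → ℝ) (a b : ℕ) : pd (a, b) (pd2 f) = pd (a, b + 1) f := by
  simp only [pd, Function.iterate_succ_apply]

lemma pd_const (c : ℝ) (a b : ℕ) :
    pd (a, b) (fun _ ↦ c) = fun _ ↦ if a + b = 0 then c else 0 := by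
  induction a, b using multiindex_induction with
  | zero => rfl
  | succ_snd b ih => rw [pd_zero_succ, ih]; funext x; simp [pd2]
  | succ_fst a b ih => rw [pd_succ_fst, ih]; funext x; simp [pd1]

lemma pd_add (hf : ContDiff ℝ ∞ f) (hg : ContDiff ℝ ∞ g) (a b : ℕ) :
    pd (a, b) (fun x ↦ f x + g x) = fun x ↦ pd (a, b) f x + pd (a, b) g x := by
  have hfd := differentiable_pd hf
  have hgd := differentiable_pd hg
  induction a, b using multiindex_induction with
  | zero => rfl
  | succ_snd b ih => simp only [pd_zero_succ, ih, pd2_add (hfd 0 b) (hgd 0 b)]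
  | succ_fst a b ih => simp only [pd_succ_fst, ih, pd1_add (hfd a b) (hgd a b)]

lemma pd_const_mul (c : ℝ) (f : ℝ × ℝ → ℝ) (a b : ℕ) :
    pd (a, b) (fun x ↦ c * f x) = fun x ↦ c * pd (a, b) f x := by
  induction a, b using multiindex_induction with
  | zero => rfl
  | succ_snd b ih => simp only [pd_zero_succ, ih, pd2_const_mul]
  | succ_fst a b ih => simp only [pd_succ_fst, ih, pd1_const_mul]

lemma pd_fst_mul (hf : ContDiff ℝ ∞ f) (a b : ℕ) :
    pd (a, b) (fun x ↦ x.1 * f x) = fun x ↦ x.1 * pd (a, b) f x + a * pd (a - 1, b) f x := by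
  have hd := differentiable_pd hf
  induction a, b using multiindex_induction with
  | zero => simp [pd]
  | succ_snd b ih => simp [pd_zero_succ, ih, pd2_fst_mul (hd 0 b)]
  | succ_fst a b ih =>
    have hmul : Differentiable ℝ fun x : ℝ × ℝ ↦ x.1 * pd (a, b) f x :=
      differentiable_fst.mul (hd a b)
    rw [pd_succ_fst, ih, pd1_add hmul ((hd _ b).const_mul _), pd1_fst_mul (hd a b),
      pd1_const_mul, ← pd_succ_fst, ← pd_succ_fst]
    funext x
    rcases a with _ | a
    · simp [add_comm]
    · simp only [Nat.add_sub_cancel, Nat.cast_add, Nat.cast_one]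
      ring

lemma pd_snd_mul (hf : ContDiff ℝ ∞ f) (a b : ℕ) :
    pd (a, b) (fun x ↦ x.2 * f x) = fun x ↦ x.2 * pd (a, b) f x + b * pd (a, b - 1) f x := by
  have hd := differentiable_pd hf
  induction a, b using multiindex_induction with
  | zero => simp [pd]
  | succ_snd b ih =>
    have hmul : Differentiable ℝ fun x : ℝ × ℝ ↦ x.2 * pd (0, b) f x :=
      differentiable_snd.mul (hd 0 b)
    rw [pd_zero_succ, ih, pd2_add hmul ((hd 0 _).const_mul _), pd2_snd_mul (hd 0 b),
      pd2_const_mul, ← pd_zero_succ, ← pd_zero_succ]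
    funext x
    rcases b with _ | b
    · simp [add_comm]
    · simp only [Nat.add_sub_cancel, Nat.cast_add, Nat.cast_one]
      ring
  | succ_fst a b ih =>
    have hmul : Differentiable ℝ fun x : ℝ × ℝ ↦ x.2 * pd (a, b) f x :=
      differentiable_snd.mul (hd a b)
    rw [pd_succ_fst, ih, pd1_add hmul ((hd a _).const_mul _), pd1_snd_mul (hd a b),
      pd1_const_mul, ← pd_succ_fst, ← pd_succ_fst]

lemma pd_fst_sq_mul (hf : ContDiff ℝ ∞ f) (a b : ℕ) (x : ℝ × ℝ) :
    pd (a, b) (fun x ↦ x.1 ^ 2 * f x) x = x.1 ^ 2 * pd (a, b) f x +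
      (2 * x.1 * (a * pd (a - 1, b) f x) + a * ((a - 1 : ℕ) * pd (a - 2, b) f x)) := by
  simp_rw [pow_two, mul_assoc, pd_fst_mul (contDiff_fst.mul hf), pd_fst_mul hf, Nat.sub_sub]
  ring

lemma pd_snd_sq_mul (hf : ContDiff ℝ ∞ f) (a b : ℕ) (x : ℝ × ℝ) :
    pd (a, b) (fun x ↦ x.2 ^ 2 * f x) x = x.2 ^ 2 * pd (a, b) f x +
      (2 * x.2 * (b * pd (a, b - 1) f x) + b * ((b - 1 : ℕ) * pd (a, b - 2) f x)) := by
  simp_rw [pow_two, mul_assoc, pd_snd_mul (contDiff_snd.mul hf), pd_snd_mul hf, Nat.sub_sub]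
  ring

lemma contDiff_comp_affine {n : WithTop ℕ∞} (hf : ContDiff ℝ n f) (r s p q : ℝ) :
    ContDiff ℝ n (fun x : ℝ × ℝ ↦ f (r * x.1 + p, s * x.2 + q)) :=
  hf.comp (by fun_prop)

lemma pd_comp_affine (hf : ContDiff ℝ ∞ f) (r s p q : ℝ) (a b : ℕ) :
    pd (a, b) (fun x : ℝ × ℝ ↦ f (r * x.1 + p, s * x.2 + q)) =
      fun x ↦ r ^ a * s ^ b * pd (a, b) f (r * x.1 + p, s * x.2 + q) := by
  induction a, b using multiindex_induction with
  | zero => simp [pd]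
  | succ_snd b ih =>
    rw [pd_zero_succ, ih, pd2_const_mul, pd2_comp_affine (differentiable_pd hf 0 b), pd_zero_succ]
    funext x
    ring
  | succ_fst a b ih =>
    rw [pd_succ_fst, ih, pd1_const_mul, pd1_comp_affine (differentiable_pd hf a b), pd_succ_fst]
    funext x
    ring

end PartialDerivatives

/-! ### Series of smooth functions -/

/-- A family of smooth functions on `ℝ²` such that, for each multi-index `(a, b)`, the `(a, b)`-th
partial derivatives are bounded, uniformly on `ℝ²`, by a summable family. Such a series may be
differentiated termwise any number of times. -/
structure DominatedSeries {ι : Type*} (f : ι → ℝ × ℝ → ℝ) : Prop where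
  contDiff_term (i : ι) : ContDiff ℝ ∞ (f i)
  exists_bound (a b : ℕ) : ∃ u : ι → ℝ, Summable u ∧ ∀ i x, |pd (a, b) (f i) x| ≤ u i

namespace DominatedSeries

variable {ι : Type*} {f : ι → ℝ × ℝ → ℝ}

lemma pd1_comp (hf : DominatedSeries f) : DominatedSeries fun i ↦ pd1 (f i) where
  contDiff_term i := contDiff_pd1 (hf.contDiff_term i) le_rfl
  exists_bound a b := by
    simpa only [pd_pd1 (hf.contDiff_term _)] using hf.exists_bound (a + 1) b

lemma pd2_comp (hf : DominatedSeries f) : DominatedSeries fun i ↦ pd2 (f i) where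
  contDiff_term i := contDiff_pd2 (hf.contDiff_term i) le_rfl
  exists_bound a b := by simpa only [pd_pd2] using hf.exists_bound a (b + 1)

lemma differentiable_term (hf : DominatedSeries f) (i : ι) : Differentiable ℝ (f i) :=
  (hf.contDiff_term i).differentiable (by simp)

lemma summable (hf : DominatedSeries f) (x : ℝ × ℝ) : Summable fun i ↦ f i x := by
  obtain ⟨u, hu, hfu⟩ := hf.exists_bound 0 0
  exact .of_norm_bounded hu fun i ↦ hfu i x

lemma exists_bound_fderiv (hf : DominatedSeries f) :
    ∃ u : ι → ℝ, Summable u ∧ ∀ i x, ‖fderiv ℝ (f i) x‖ ≤ u i := by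
  obtain ⟨u, hu, hfu⟩ := hf.exists_bound 1 0
  obtain ⟨v, hv, hfv⟩ := hf.exists_bound 0 1
  exact ⟨fun i ↦ u i + v i, hu.add hv, fun i x ↦
    (norm_fderiv_le_abs_pd1_add_abs_pd2 _ x).trans (add_le_add (hfu i x) (hfv i x))⟩

lemma differentiable_tsum (hf : DominatedSeries f) : Differentiable ℝ fun x ↦ ∑' i, f i x := by
  obtain ⟨u, hu, hfu⟩ := hf.exists_bound_fderiv
  exact _root_.differentiable_tsum hu (fun i x ↦ (hf.differentiable_term i x).hasFDerivAt) hfu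

lemma fderiv_tsum_apply (hf : DominatedSeries f) (x v : ℝ × ℝ) :
    fderiv ℝ (fun y ↦ ∑' i, f i y) x v = ∑' i, fderiv ℝ (f i) x v := by
  obtain ⟨u, hu, hfu⟩ := hf.exists_bound_fderiv
  have hsum : Summable fun i ↦ fderiv ℝ (f i) x := .of_norm_bounded hu fun i ↦ hfu i x
  rw [_root_.fderiv_tsum_apply hu hf.differentiable_term hfu (hf.summable 0)]
  exact (ContinuousLinearMap.apply ℝ ℝ v).map_tsum hsum

lemma pd1_tsum (hf : DominatedSeries f) :
    pd1 (fun x ↦ ∑' i, f i x) = fun x ↦ ∑' i, pd1 (f i) x :=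
  funext fun x ↦ hf.fderiv_tsum_apply x (1, 0)

lemma pd2_tsum (hf : DominatedSeries f) :
    pd2 (fun x ↦ ∑' i, f i x) = fun x ↦ ∑' i, pd2 (f i) x :=
  funext fun x ↦ hf.fderiv_tsum_apply x (0, 1)

lemma contDiff_tsum (hf : DominatedSeries f) : ContDiff ℝ ∞ fun x ↦ ∑' i, f i x := by
  refine contDiff_infty.2 fun n ↦ ?_
  induction n generalizing f with
  | zero => exact contDiff_zero.2 hf.differentiable_tsum.continuous
  | succ n ih =>
    refine contDiff_succ_of_pd hf.differentiable_tsum ?_ ?_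
    · rw [hf.pd1_tsum]
      exact ih hf.pd1_comp
    · rw [hf.pd2_tsum]
      exact ih hf.pd2_comp

lemma pd_comp (hf : DominatedSeries f) (a b : ℕ) : DominatedSeries fun i ↦ pd (a, b) (f i) := by
  induction a, b using multiindex_induction with
  | zero => exact hf
  | succ_snd b ih => simpa only [pd_zero_succ] using ih.pd2_comp
  | succ_fst a b ih => simpa only [pd_succ_fst] using ih.pd1_comp

lemma pd_tsum (hf : DominatedSeries f) (a b : ℕ) :
    pd (a, b) (fun x ↦ ∑' i, f i x) = fun x ↦ ∑' i, pd (a, b) (f i) x := by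
  induction a, b using multiindex_induction with
  | zero => rfl
  | succ_snd b ih => simp only [pd_zero_succ, ih, (hf.pd_comp 0 b).pd2_tsum]
  | succ_fst a b ih => simp only [pd_succ_fst, ih, (hf.pd_comp a b).pd1_tsum]

lemma abs_pd_tsum_le (hf : DominatedSeries f) {a b : ℕ} {w : ι → ℝ} {s : ℝ} (hw : HasSum w s)
    {x : ℝ × ℝ} (hb : ∀ i, |pd (a, b) (f i) x| ≤ w i) :
    |pd (a, b) (fun y ↦ ∑' i, f i y) x| ≤ s := by
  rw [hf.pd_tsum]
  exact tsum_of_norm_bounded (f := fun i ↦ pd (a, b) (f i) x) hw hb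

end DominatedSeries

/-! ### The kernel -/

/-- The kernel `1 / (x₁² + x₂² + 1)`, whose rescalings in the second variable are the terms of the
base function. -/
def cauchyKernel (x : ℝ × ℝ) : ℝ := 1 / (x.1 ^ 2 + x.2 ^ 2 + 1)

lemma contDiff_cauchyKernel {n : WithTop ℕ∞} : ContDiff ℝ n cauchyKernel :=
  contDiff_const.div (by fun_prop) fun x ↦ by positivity

lemma sq_mul_cauchyKernel_add (x : ℝ × ℝ) :
    x.1 ^ 2 * cauchyKernel x + (x.2 ^ 2 * cauchyKernel x + cauchyKernel x) = 1 := by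
  have hpos : x.1 ^ 2 + x.2 ^ 2 + 1 ≠ 0 := by positivity
  rw [cauchyKernel]
  field_simp
  ring

lemma pd_cauchyKernel_recursion {a b : ℕ} (hab : a + b ≠ 0) (x : ℝ × ℝ) :
    (x.1 ^ 2 + x.2 ^ 2 + 1) * pd (a, b) cauchyKernel x =
      -((2 * x.1 * (a * pd (a - 1, b) cauchyKernel x) +
          a * ((a - 1 : ℕ) * pd (a - 2, b) cauchyKernel x)) +
        (2 * x.2 * (b * pd (a, b - 1) cauchyKernel x) +
          b * ((b - 1 : ℕ) * pd (a, b - 2) cauchyKernel x))) := by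
  have hK : ContDiff ℝ ∞ cauchyKernel := contDiff_cauchyKernel
  have h₁ : ContDiff ℝ ∞ fun x : ℝ × ℝ ↦ x.1 ^ 2 * cauchyKernel x := (contDiff_fst.pow 2).mul hK
  have h₂ : ContDiff ℝ ∞ fun x : ℝ × ℝ ↦ x.2 ^ 2 * cauchyKernel x := (contDiff_snd.pow 2).mul hK
  have hzero := congrFun (pd_const 1 a b) x
  rw [← funext sq_mul_cauchyKernel_add, pd_add h₁ (h₂.add hK), pd_add h₂ hK] at hzero
  simp only [pd_fst_sq_mul hK, pd_snd_sq_mul hK, if_neg hab] at hzero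
  linear_combination hzero

section FactorialBounds

variable {u : ℕ → ℝ} {B C : ℝ} {n : ℕ}

lemma abs_natCast_mul_pred_le (hB : 0 < B) (hC : 0 ≤ C)
    (hu : ∀ i < n, |u i| ≤ B ^ i * i ! * C) :
    |n * u (n - 1)| ≤ B ^ n * n ! * (C / B) := by
  rcases n with _ | n
  · simpa using div_nonneg hC hB.le
  · calc |((n + 1 : ℕ) : ℝ) * u n| = (n + 1 : ℕ) * |u n| := by rw [abs_mul, Nat.abs_cast]
      _ ≤ (n + 1 : ℕ) * (B ^ n * n ! * C) := by gcongr; exact hu n n.lt_succ_self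
      _ = B ^ (n + 1) * (n + 1)! * (C / B) := by
        rw [Nat.factorial_succ]
        push_cast
        field_simp
        ring

lemma abs_leibniz_sq_remainder_le (hB : 0 < B) (hC : 0 ≤ C)
    (hu : ∀ i < n, |u i| ≤ B ^ i * i ! * C) (t : ℝ) :
    |2 * t * (n * u (n - 1)) + n * ((n - 1 : ℕ) * u (n - 2))| ≤
      B ^ n * n ! * C * ((t ^ 2 + 1) / B + 1 / B ^ 2) := by
  have hfst := abs_natCast_mul_pred_le hB hC hu
  have hsnd : |n * ((n - 1 : ℕ) * u (n - 1 - 1))| ≤ B ^ n * n ! * (C / B / B) :=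
    abs_natCast_mul_pred_le (u := fun i ↦ i * u (i - 1)) hB (by positivity) fun i hi ↦
      abs_natCast_mul_pred_le hB hC fun j hj ↦ hu j (hj.trans hi)
  have hamgm : |2 * t| ≤ t ^ 2 + 1 := by
    rw [abs_le]
    constructor <;> nlinarith [sq_nonneg (t + 1), sq_nonneg (t - 1)]
  rw [Nat.sub_sub] at hsnd
  calc |2 * t * (n * u (n - 1)) + n * ((n - 1 : ℕ) * u (n - 2))|
      ≤ |2 * t| * |n * u (n - 1)| + |n * ((n - 1 : ℕ) * u (n - 2))| :=
        (abs_add_le _ _).trans_eq (by rw [abs_mul (2 * t)])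
    _ ≤ (t ^ 2 + 1) * (B ^ n * n ! * (C / B)) + B ^ n * n ! * (C / B / B) := by gcongr
    _ = B ^ n * n ! * C * ((t ^ 2 + 1) / B + 1 / B ^ 2) := by field_simp

end FactorialBounds

lemma abs_cauchyKernel_le_one (x : ℝ × ℝ) : |cauchyKernel x| ≤ 1 := by
  rw [cauchyKernel, abs_of_pos (by positivity), div_le_one (by positivity)]
  linarith [sq_nonneg x.1, sq_nonneg x.2]

theorem abs_pd_cauchyKernel_le (a b : ℕ) (x : ℝ × ℝ) :
    |pd (a, b) cauchyKernel x| ≤ 3 ^ (a + b) * (a ! * b !) := by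
  induction hn : a + b using Nat.strong_induction_on generalizing a b with
  | _ n ih =>
  subst hn
  rcases eq_or_ne (a + b) 0 with hab | hab
  · obtain ⟨rfl, rfl⟩ : a = 0 ∧ b = 0 := by omega
    simpa [pd] using abs_cauchyKernel_le_one x
  set T : ℝ := 3 ^ (a + b) * (a ! * b !) with hT
  have hfst := abs_leibniz_sq_remainder_le (u := fun i ↦ pd (i, b) cauchyKernel x) (n := a)
    three_pos (by positivity : (0 : ℝ) ≤ 3 ^ b * b !)
    (fun i hi ↦ (ih (i + b) (by omega) i b rfl).trans_eq (by ring)) x.1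
  have hsnd := abs_leibniz_sq_remainder_le (u := fun j ↦ pd (a, j) cauchyKernel x) (n := b)
    three_pos (by positivity : (0 : ℝ) ≤ 3 ^ a * a !)
    (fun j hj ↦ (ih (a + j) (by omega) a j rfl).trans_eq (by ring)) x.2
  have hQ : 0 < x.1 ^ 2 + x.2 ^ 2 + 1 := by positivity
  refine le_of_mul_le_mul_left ?_ hQ
  calc (x.1 ^ 2 + x.2 ^ 2 + 1) * |pd (a, b) cauchyKernel x|
      = |(x.1 ^ 2 + x.2 ^ 2 + 1) * pd (a, b) cauchyKernel x| := by rw [abs_mul, abs_of_pos hQ]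
    _ ≤ T * ((x.1 ^ 2 + 1) / 3 + 1 / 3 ^ 2) + T * ((x.2 ^ 2 + 1) / 3 + 1 / 3 ^ 2) := by
      rw [pd_cauchyKernel_recursion hab, abs_neg]
      refine (abs_add_le _ _).trans ((add_le_add hfst hsnd).trans_eq ?_)
      rw [hT]
      ring
    _ ≤ T * (x.1 ^ 2 + x.2 ^ 2 + 1) := by
      rw [← mul_add]
      exact mul_le_mul_of_nonneg_left (by linarith [sq_nonneg x.1, sq_nonneg x.2]) (by positivity)
    _ = (x.1 ^ 2 + x.2 ^ 2 + 1) * T := mul_comm _ _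

/-! ### The Ostrowski function -/

/-- The sequence of quotients `m_k = M_{k+1} / M_k`. -/
def quotSeq (M : ℕ → ℝ) (k : ℕ) : ℝ := M (k + 1) / M k

section Ostrowski

variable {M : ℕ → ℝ} {r : ℝ} {j : ℕ}

lemma quotSeq_pos (hMpos : ∀ k, 0 < M k) (k : ℕ) : 0 < quotSeq M k :=
  div_pos (hMpos _) (hMpos _)

lemma one_le_quotSeq (hMpos : ∀ k, 0 < M k) (hMmono : Monotone M) (k : ℕ) : 1 ≤ quotSeq M k :=
  (one_le_div (hMpos k)).2 (hMmono k.le_succ)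

lemma inv_rhoSeq (M : ℕ → ℝ) (k : ℕ) : (rhoSeq M k)⁻¹ = quotSeq M k :=
  inv_div _ _

lemma antitoneOn_pow_div (hMpos : ∀ k, 0 < M k) (hMlc : LogConvexSeq M) (hr : 0 ≤ r)
    (hrj : r ≤ quotSeq M j) : AntitoneOn (fun n ↦ r ^ (n + 2) / M n) (Set.Ici j) := by
  refine antitoneOn_nat_Ici_of_succ_le fun n hn ↦ ?_
  have hrn : r * M n ≤ M (n + 1) := (le_div_iff₀ (hMpos n)).1 (hrj.trans (hMlc hn))
  rw [div_le_div_iff₀ (hMpos _) (hMpos _)]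
  calc r ^ (n + 1 + 2) * M n = r ^ (n + 2) * (r * M n) := by ring
    _ ≤ r ^ (n + 2) * M (n + 1) := by gcongr

lemma pow_div_le_ostrowski (hMpos : ∀ k, 0 < M k) (hMlc : LogConvexSeq M) (hr : 0 ≤ r)
    (hrj : r ≤ quotSeq M j) (n : ℕ) : r ^ (n + 2) / M n ≤ ostrowski M r := by
  have hanti := antitoneOn_pow_div hMpos hMlc hr hrj
  have hbdd : BddAbove (Set.range fun n ↦ r ^ (n + 2) / M n) :=
    (isBoundedUnder_of_eventually_le <| (eventually_ge_atTop j).mono fun _ hn ↦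
      hanti Set.self_mem_Ici hn hn).bddAbove_range
  exact le_ciSup hbdd n

lemma ostrowski_pos (hMpos : ∀ k, 0 < M k) (hMlc : LogConvexSeq M) (hr : 0 < r)
    (hrj : r ≤ quotSeq M j) : 0 < ostrowski M r :=
  (div_pos (pow_pos hr _) (hMpos 0)).trans_le (pow_div_le_ostrowski hMpos hMlc hr.le hrj 0)

lemma pow_div_ostrowski_le (hMpos : ∀ k, 0 < M k) (hMlc : LogConvexSeq M) (hr : 0 < r)
    (hrj : r ≤ quotSeq M j) (n : ℕ) : r ^ (n + 2) / ostrowski M r ≤ M n :=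
  (div_le_comm₀ (ostrowski_pos hMpos hMlc hr hrj) (hMpos n)).2
    (pow_div_le_ostrowski hMpos hMlc hr.le hrj n)

end Ostrowski

/-! ### The base function -/

section BaseFunction

/-- The weight `m_k² / (2^k φ(m_k))` of the base function `h`, with the index shifted by one so that
it starts from `0`. -/
def baseWeight (M : ℕ → ℝ) (k : ℕ) : ℝ :=
  quotSeq M (k + 1) ^ 2 / (2 ^ (k + 1) * ostrowski M (quotSeq M (k + 1)))

/-- The summand of the base function `h` with weight `baseWeight M k`, written as an affine
rescaling of the kernel to fit `pd_comp_affine`. -/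
def baseTerm (M : ℕ → ℝ) (k : ℕ) (x : ℝ × ℝ) : ℝ :=
  baseWeight M k * cauchyKernel (1 * x.1 + 0, quotSeq M (k + 1) * x.2 + 0)

variable {M : ℕ → ℝ}

lemma baseH_eq_tsum_baseTerm (M : ℕ → ℝ) : baseH M = fun x ↦ ∑' k, baseTerm M k x := by
  funext x
  simp only [baseH, baseTerm, baseWeight, cauchyKernel, quotSeq, one_mul, add_zero]

lemma contDiff_baseTerm {n : WithTop ℕ∞} (M : ℕ → ℝ) (k : ℕ) : ContDiff ℝ n (baseTerm M k) :=
  contDiff_const.mul (contDiff_comp_affine contDiff_cauchyKernel _ _ _ _)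

lemma abs_baseWeight_mul_pow_le (hMpos : ∀ k, 0 < M k) (hMlc : LogConvexSeq M) (k b : ℕ) :
    |baseWeight M k * quotSeq M (k + 1) ^ b| ≤ M b * (1 / 2 / 2 ^ k) := by
  have hm := quotSeq_pos hMpos (k + 1)
  have hφ := ostrowski_pos hMpos hMlc hm le_rfl
  rw [baseWeight, abs_of_pos (by positivity)]
  calc quotSeq M (k + 1) ^ 2 / (2 ^ (k + 1) * ostrowski M (quotSeq M (k + 1))) *
        quotSeq M (k + 1) ^ b
      = quotSeq M (k + 1) ^ (b + 2) / ostrowski M (quotSeq M (k + 1)) * (1 / 2 / 2 ^ k) := by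
        field_simp
        ring
    _ ≤ M b * (1 / 2 / 2 ^ k) := by
        gcongr
        exact pow_div_ostrowski_le hMpos hMlc hm le_rfl b

lemma abs_pd_baseTerm_le (hMpos : ∀ k, 0 < M k) (hMlc : LogConvexSeq M) (a b k : ℕ) (x : ℝ × ℝ) :
    |pd (a, b) (baseTerm M k) x| ≤ 3 ^ (a + b) * (a ! * b !) * M b * (1 / 2 / 2 ^ k) := by
  have hpd : pd (a, b) (baseTerm M k) x = baseWeight M k * quotSeq M (k + 1) ^ b *
      pd (a, b) cauchyKernel (1 * x.1 + 0, quotSeq M (k + 1) * x.2 + 0) := by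
    unfold baseTerm
    rw [pd_const_mul, pd_comp_affine contDiff_cauchyKernel, one_pow, one_mul, mul_assoc]
  have hw := abs_baseWeight_mul_pow_le hMpos hMlc k b
  rw [hpd, abs_mul]
  exact (mul_le_mul hw (abs_pd_cauchyKernel_le a b _) (abs_nonneg _)
    ((abs_nonneg _).trans hw)).trans_eq (by ring)

lemma dominatedSeries_baseTerm (hMpos : ∀ k, 0 < M k) (hMlc : LogConvexSeq M) :
    DominatedSeries (baseTerm M) where
  contDiff_term := contDiff_baseTerm M
  exists_bound a b := ⟨_, (summable_geometric_two' 1).mul_left _,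
    abs_pd_baseTerm_le hMpos hMlc a b⟩

lemma contDiff_baseH (hMpos : ∀ k, 0 < M k) (hMlc : LogConvexSeq M) : ContDiff ℝ ∞ (baseH M) := by
  rw [baseH_eq_tsum_baseTerm]
  exact (dominatedSeries_baseTerm hMpos hMlc).contDiff_tsum

theorem abs_pd_baseH_le (hMpos : ∀ k, 0 < M k) (hMlc : LogConvexSeq M) (a b : ℕ) (x : ℝ × ℝ) :
    |pd (a, b) (baseH M) x| ≤ 3 ^ (a + b) * (a ! * b !) * M b := by
  rw [baseH_eq_tsum_baseTerm]
  exact ((dominatedSeries_baseTerm hMpos hMlc).abs_pd_tsum_le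
    ((hasSum_geometric_two' 1).mul_left _) fun k ↦ abs_pd_baseTerm_le hMpos hMlc a b k x).trans_eq
      (mul_one _)

lemma blockF_eq_baseH_comp_affine (M : ℕ → ℝ) (q ρ : ℝ) :
    blockF M q ρ = fun x ↦ baseH M (ρ⁻¹ * x.1 + -q, ρ⁻¹ * x.2 + 0) := by
  funext x
  rw [blockF, div_eq_inv_mul, div_eq_inv_mul, sub_eq_add_neg, add_zero]

lemma contDiff_blockF (hMpos : ∀ k, 0 < M k) (hMlc : LogConvexSeq M) (q ρ : ℝ) :
    ContDiff ℝ ∞ (blockF M q ρ) := by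
  rw [blockF_eq_baseH_comp_affine]
  exact contDiff_comp_affine (contDiff_baseH hMpos hMlc) _ _ _ _

lemma abs_pd_blockF_le (hMpos : ∀ k, 0 < M k) (hMlc : LogConvexSeq M) (q ρ : ℝ) (a b : ℕ)
    (x : ℝ × ℝ) :
    |pd (a, b) (blockF M q ρ) x| ≤ |ρ⁻¹| ^ (a + b) * (3 ^ (a + b) * (a ! * b !) * M b) := by
  rw [blockF_eq_baseH_comp_affine, pd_comp_affine (contDiff_baseH hMpos hMlc), ← pow_add, abs_mul,
    abs_pow]
  gcongr
  exact abs_pd_baseH_le hMpos hMlc a b _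

end BaseFunction

/-! ### The series `F_Γ` -/

section FGammaSeries

/-- The weight `1 / (φ(1 / ρ_l) 2^l)` of `F_Γ` if `l ∈ Λ`, and `0` if `l ∉ Λ`, so that `F_Γ`
is a series over all of `ℕ`. -/
def gammaWeight (M : ℕ → ℝ) (Λ : Set ℕ) (l : ℕ) : ℝ :=
  Λ.indicator (fun l ↦ (ostrowski M (quotSeq M l) * 2 ^ l)⁻¹) l

/-- The summand of `F_Γ` with weight `gammaWeight M Λ l`. -/
def gammaTerm (M : ℕ → ℝ) (E : ℝ → ℝ) (Λ : Set ℕ) (l : ℕ) (x : ℝ × ℝ) : ℝ :=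
  gammaWeight M Λ l * blockF M (E (rhoSeq M l) / rhoSeq M l) (rhoSeq M l) x

variable {M : ℕ → ℝ}

lemma FGamma_eq_tsum_gammaTerm (M : ℕ → ℝ) (E : ℝ → ℝ) (Λ : Set ℕ) :
    FGamma M E Λ = fun x ↦ ∑' l, gammaTerm M E Λ l x := by
  funext x
  refine tsum_congr fun l ↦ ?_
  by_cases hl : l ∈ Λ <;> simp [gammaTerm, gammaWeight, hl, inv_rhoSeq, div_eq_inv_mul]

lemma contDiff_gammaTerm (hMpos : ∀ k, 0 < M k) (hMlc : LogConvexSeq M) (E : ℝ → ℝ) (Λ : Set ℕ)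
    (l : ℕ) : ContDiff ℝ ∞ (gammaTerm M E Λ l) :=
  contDiff_const.mul (contDiff_blockF hMpos hMlc _ _)

lemma abs_gammaWeight_le (hMpos : ∀ k, 0 < M k) (hMlc : LogConvexSeq M) (Λ : Set ℕ) (l : ℕ) :
    |gammaWeight M Λ l| ≤ (ostrowski M (quotSeq M l) * 2 ^ l)⁻¹ := by
  have hφ := ostrowski_pos hMpos hMlc (quotSeq_pos hMpos l) le_rfl
  have hw : 0 ≤ (ostrowski M (quotSeq M l) * 2 ^ l)⁻¹ := by positivity
  by_cases hl : l ∈ Λ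
  · rw [gammaWeight, Set.indicator_of_mem hl, abs_of_nonneg hw]
  · rwa [gammaWeight, Set.indicator_of_notMem hl, abs_zero]

lemma abs_gammaWeight_mul_pow_le (hMpos : ∀ k, 0 < M k) (hMmono : Monotone M)
    (hMlc : LogConvexSeq M) (Λ : Set ℕ) (l n : ℕ) :
    |gammaWeight M Λ l| * quotSeq M l ^ n ≤ M n * (1 / 2) ^ l := by
  have hm := quotSeq_pos hMpos l
  have hφ := ostrowski_pos hMpos hMlc hm le_rfl
  calc |gammaWeight M Λ l| * quotSeq M l ^ n
      ≤ (ostrowski M (quotSeq M l) * 2 ^ l)⁻¹ * quotSeq M l ^ (n + 2) := by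
        gcongr
        · exact abs_gammaWeight_le hMpos hMlc Λ l
        · exact one_le_quotSeq hMpos hMmono l
        · exact n.le_add_right 2
    _ = quotSeq M l ^ (n + 2) / ostrowski M (quotSeq M l) * (1 / 2) ^ l := by
        rw [one_div_pow]
        field_simp
    _ ≤ M n * (1 / 2) ^ l := by
        gcongr
        exact pow_div_ostrowski_le hMpos hMlc hm le_rfl n

lemma abs_pd_gammaTerm_le (hMpos : ∀ k, 0 < M k) (hMmono : Monotone M) (hMlc : LogConvexSeq M)
    (E : ℝ → ℝ) (Λ : Set ℕ) (a b l : ℕ) (x : ℝ × ℝ) :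
    |pd (a, b) (gammaTerm M E Λ l) x| ≤
      3 ^ (a + b) * (a ! * b !) * M (a + b) ^ 2 * (1 / 2) ^ l := by
  have hblock := abs_pd_blockF_le hMpos hMlc (E (rhoSeq M l) / rhoSeq M l) (rhoSeq M l) a b x
  have hm := quotSeq_pos hMpos l
  have hMab := hMpos (a + b)
  rw [inv_rhoSeq, abs_of_pos hm] at hblock
  calc |pd (a, b) (gammaTerm M E Λ l) x|
      = |gammaWeight M Λ l| *
          |pd (a, b) (blockF M (E (rhoSeq M l) / rhoSeq M l) (rhoSeq M l)) x| := by
        unfold gammaTerm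
        rw [pd_const_mul, abs_mul]
    _ ≤ |gammaWeight M Λ l| *
          (quotSeq M l ^ (a + b) * (3 ^ (a + b) * (a ! * b !) * M (a + b))) := by
        refine mul_le_mul_of_nonneg_left (hblock.trans ?_) (abs_nonneg _)
        gcongr
        exact hMmono (b.le_add_left a)
    _ = |gammaWeight M Λ l| * quotSeq M l ^ (a + b) * (3 ^ (a + b) * (a ! * b !) * M (a + b)) :=
        (mul_assoc _ _ _).symm
    _ ≤ M (a + b) * (1 / 2) ^ l * (3 ^ (a + b) * (a ! * b !) * M (a + b)) := by
        gcongr ?_ * _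
        exact abs_gammaWeight_mul_pow_le hMpos hMmono hMlc Λ l (a + b)
    _ = 3 ^ (a + b) * (a ! * b !) * M (a + b) ^ 2 * (1 / 2) ^ l := by ring

lemma dominatedSeries_gammaTerm (hMpos : ∀ k, 0 < M k) (hMmono : Monotone M)
    (hMlc : LogConvexSeq M) (E : ℝ → ℝ) (Λ : Set ℕ) : DominatedSeries (gammaTerm M E Λ) where
  contDiff_term := contDiff_gammaTerm hMpos hMlc E Λ
  exists_bound a b := ⟨_, summable_geometric_two.mul_left _,
    abs_pd_gammaTerm_le hMpos hMmono hMlc E Λ a b⟩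

theorem contDiff_FGamma (hMpos : ∀ k, 0 < M k) (hMmono : Monotone M) (hMlc : LogConvexSeq M)
    (E : ℝ → ℝ) (Λ : Set ℕ) : ContDiff ℝ ∞ (FGamma M E Λ) := by
  rw [FGamma_eq_tsum_gammaTerm]
  exact (dominatedSeries_gammaTerm hMpos hMmono hMlc E Λ).contDiff_tsum

theorem abs_pd_FGamma_le (hMpos : ∀ k, 0 < M k) (hMmono : Monotone M) (hMlc : LogConvexSeq M)
    (E : ℝ → ℝ) (Λ : Set ℕ) (a b : ℕ) (x : ℝ × ℝ) :
    |pd (a, b) (FGamma M E Λ) x| ≤ 3 ^ (a + b) * (a ! * b !) * M (a + b) ^ 2 * 2 := by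
  rw [FGamma_eq_tsum_gammaTerm]
  exact (dominatedSeries_gammaTerm hMpos hMmono hMlc E Λ).abs_pd_tsum_le
    (hasSum_geometric_two.mul_left _) fun l ↦ abs_pd_gammaTerm_le hMpos hMmono hMlc E Λ a b l x

end FGammaSeries

lemma memDC_of_forall_abs_pd_le {N : ℕ → ℝ} {f : ℝ × ℝ → ℝ} {A B : ℝ} (hf : ContDiff ℝ ∞ f)
    (hA : 0 < A) (hB : 0 < B)
    (hbound : ∀ x a b, |pd (a, b) f x| ≤ A * B ^ (a + b) * (a ! * b !) * N (a + b)) :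
    MemDC N f :=
  ⟨hf, fun _ _ ↦ ⟨A, hA, B, hB, fun x _ α ↦ hbound x α.1 α.2⟩⟩

theorem FGamma_in_CMsq_general {M : ℕ → ℝ} (hMpos : ∀ k, 0 < M k) (hMmono : Monotone M)
    (hMlc : LogConvexSeq M) (E : ℝ → ℝ) (Λ : Set ℕ) :
    ContDiff ℝ ∞ (FGamma M E Λ) ∧
    (∀ x : ℝ × ℝ, ∀ α : ℕ × ℕ,
      |pd α (FGamma M E Λ) x| ≤
        8 ^ (α.1 + α.2 + 3) * (α.1 ! * α.2 !) * M (α.1 + α.2) ^ 2) ∧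
    MemDC (fun k ↦ M k ^ 2) (FGamma M E Λ) := by
  have hsmooth := contDiff_FGamma hMpos hMmono hMlc E Λ
  have hpd := abs_pd_FGamma_le hMpos hMmono hMlc E Λ
  refine ⟨hsmooth, fun x α ↦ ?_,
    memDC_of_forall_abs_pd_le hsmooth two_pos three_pos fun x a b ↦
      (hpd a b x).trans_eq (by ring)⟩
  have hconst : (3 : ℝ) ^ (α.1 + α.2) * 2 ≤ 8 ^ (α.1 + α.2 + 3) := by
    rw [pow_add 8]
    gcongr <;> norm_num
  calc |pd α (FGamma M E Λ) x|
      ≤ 3 ^ (α.1 + α.2) * (α.1 ! * α.2 !) * M (α.1 + α.2) ^ 2 * 2 := hpd α.1 α.2 x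
    _ = 3 ^ (α.1 + α.2) * 2 * (α.1 ! * α.2 !) * M (α.1 + α.2) ^ 2 := by ring
    _ ≤ 8 ^ (α.1 + α.2 + 3) * (α.1 ! * α.2 !) * M (α.1 + α.2) ^ 2 := by gcongr

/-- Lemma 3.9 (regularity of `F_Γ`): the function
`F_Γ(x) = Σ_{λ∈Λ} f_{q_λ,ρ_λ}(x)/(φ(ρ_λ⁻¹) 2^λ)` is `C^∞` on `ℝ²`, satisfies
`|∂^α F_Γ(x)| ≤ 8^{|α|+3} α! M_{|α|}²`, and hence belongs to `C_{M²}(ℝ²)`. -/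
theorem FGamma_in_CMsq (M : ℕ → ℝ) (hMpos : ∀ k, 0 < M k) (hMmono : Monotone M)
    (hMlc : LogConvexSeq M) (hM0 : M 0 = 1)
    (E : ℝ → ℝ) (hEmap : ∀ r : ℝ, 0 ≤ r → 0 ≤ E r ∧ E r < 1)
    (hEmono : StrictMonoOn E (Set.Ici 0)) (hEcont : ContinuousOn E (Set.Ici 0))
    (hE0 : E 0 = 0) (hElim : Tendsto (fun r => E r / r) (𝓝[>] (0 : ℝ)) atTop)
    (Λ : Set ℕ) (hΛeven : ∀ l ∈ Λ, Even l ∧ 0 < l) (hΛunb : ∀ n : ℕ, ∃ l ∈ Λ, n < l)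
    (hΛq : ∀ l ∈ Λ, 1 < E (rhoSeq M l) / rhoSeq M l) :
    ContDiff ℝ (⊤ : ℕ∞) (FGamma M E Λ) ∧
    (∀ x : ℝ × ℝ, ∀ α : ℕ × ℕ,
      |pd α (FGamma M E Λ) x| ≤
        8 ^ (α.1 + α.2 + 3) * (Nat.factorial α.1 * Nat.factorial α.2) *
          M (α.1 + α.2) ^ 2) ∧
    MemDC (fun k => M k ^ 2) (FGamma M E Λ) := by
  exact FGamma_in_CMsq_general hMpos hMmono hMlc E Λ
end
end
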